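/- arXiv:1308.3181 — 2 statements merged into one kernel-verified Lean document; each statement's English description precedes it below -/
import Mathlib

section
/- (Consequence of the Crofton formula) Let (S,d) be a Busemann surface and let Q = {p₁,…,pₙ} ⊆ S be a finite set of points in general position. Then the finite metric space (Q,d) is l1-embeddable: there exist N and a map φ : Q → ℝᴺ such that Σᵢ |φ(x)ᵢ − φ(y)ᵢ| = d(x,y) for all x, y ∈ Q. -/
open Metric Set MeasureTheory

/-- `γ` is a geodesic on the interval `[a, b]`. -/
def IsGeodesicOn {S : Type*} [MetricSpace S] (γ : ℝ → S) (a b : ℝ) : Prop :=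
  ∀ s ∈ Set.Icc a b, ∀ t ∈ Set.Icc a b, dist (γ s) (γ t) = |s - t|

/-- `γ` is a geodesic from `x` to `y`. -/
def IsGeodesicFromTo {S : Type*} [MetricSpace S] (γ : ℝ → S) (x y : S) : Prop :=
  IsGeodesicOn γ 0 (dist x y) ∧ γ 0 = x ∧ γ (dist x y) = y

/-- A geodesic metric space: every pair of points is joined by a geodesic. -/
def IsGeodesicMetricSpace (S : Type*) [MetricSpace S] : Prop :=
  ∀ x y : S, ∃ γ : ℝ → S, IsGeodesicFromTo γ x y

/-- A Busemann space: a geodesic metric space in which the distance function between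
any two geodesics is convex. -/
def IsBusemannSpace (S : Type*) [MetricSpace S] : Prop :=
  IsGeodesicMetricSpace S ∧
    ∀ (γ γ' : ℝ → S) (a b a' b' : ℝ), a ≤ b → a' ≤ b' →
      IsGeodesicOn γ a b → IsGeodesicOn γ' a' b' →
      ConvexOn ℝ (Set.Icc (0 : ℝ) 1)
        (fun t => dist (γ ((1 - t) * a + t * b)) (γ' ((1 - t) * a' + t * b')))

/-- A Busemann surface: a Busemann space homeomorphic to the plane `ℝ²`. -/
def IsBusemannSurface (S : Type*) [MetricSpace S] : Prop :=
  IsBusemannSpace S ∧ Nonempty (S ≃ₜ (ℝ × ℝ))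

/-- `G` is the image of a geodesic from `x` to `y`. -/
def IsGeodesicSegment {S : Type*} [MetricSpace S] (x y : S) (G : Set S) : Prop :=
  ∃ γ : ℝ → S, IsGeodesicFromTo γ x y ∧ G = γ '' Set.Icc 0 (dist x y)

/-- Convexity of a set with respect to a geodesic-segment assignment `seg`. -/
def SegConvex {S : Type*} (seg : S → S → Set S) (R : Set S) : Prop :=
  ∀ p ∈ R, ∀ q ∈ R, seg p q ⊆ R

/-- The convex hull: the smallest `seg`-convex set containing `Q`. -/
def segConvexHull {S : Type*} (seg : S → S → Set S) (Q : Set S) : Set S :=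
  ⋂₀ {R : Set S | SegConvex seg R ∧ Q ⊆ R}

/-- A line of `S`: the image of an isometric embedding of `ℝ` into `S`. -/
def IsLineSet {S : Type*} [MetricSpace S] (L : Set S) : Prop :=
  ∃ ℓ : ℝ → S, Isometry ℓ ∧ L = Set.range ℓ

/-- An open halfplane determined by a line `L`: a connected component of `S \ L`. -/
def IsOpenHalfplane {S : Type*} [MetricSpace S] (L H : Set S) : Prop :=
  ∃ x, x ∉ L ∧ H = connectedComponentIn Lᶜ x

/-- A closed halfplane determined by a line `L`: an open halfplane together with `L`. -/
def IsClosedHalfplane {S : Type*} [MetricSpace S] (L H : Set S) : Prop :=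
  ∃ H', IsOpenHalfplane L H' ∧ H = H' ∪ L

/-- `X` and `Y` are line-separable: they lie in different open halfplanes of some line. -/
def LineSeparable {S : Type*} [MetricSpace S] (X Y : Set S) : Prop :=
  ∃ L H₁ H₂ : Set S, IsLineSet L ∧ IsOpenHalfplane L H₁ ∧ IsOpenHalfplane L H₂ ∧
    H₁ ≠ H₂ ∧ X ⊆ H₁ ∧ Y ⊆ H₂

/-- `X` and `Y` are weakly line-separable: they lie in different closed halfplanes of
some line. -/
def WeaklyLineSeparable {S : Type*} [MetricSpace S] (X Y : Set S) : Prop :=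
  ∃ L H₁ H₂ : Set S, IsLineSet L ∧ IsClosedHalfplane L H₁ ∧ IsClosedHalfplane L H₂ ∧
    H₁ ≠ H₂ ∧ X ⊆ H₁ ∧ Y ⊆ H₂

/-- `Q` is in general position: no three distinct points of `Q` lie on a common line. -/
def InGeneralPosition {S : Type*} [MetricSpace S] (Q : Set S) : Prop :=
  ∀ x ∈ Q, ∀ y ∈ Q, ∀ z ∈ Q, x ≠ y → y ≠ z → x ≠ z →
    ∀ L : Set S, IsLineSet L → ¬(x ∈ L ∧ y ∈ L ∧ z ∈ L)

/-- `L` is a tangent line of the set `K`. -/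
def IsTangentLine {S : Type*} [MetricSpace S] (L K : Set S) : Prop :=
  IsLineSet L ∧ (K ∩ L).Nonempty ∧ ∃ H, IsClosedHalfplane L H ∧ K ⊆ H

/-- `L` is an inner bitangent of `K'` and `K''`. -/
def IsInnerBitangent {S : Type*} [MetricSpace S] (L K' K'' : Set S) : Prop :=
  IsTangentLine L K' ∧ IsTangentLine L K'' ∧
    ∃ H₁ H₂, IsClosedHalfplane L H₁ ∧ IsClosedHalfplane L H₂ ∧ H₁ ≠ H₂ ∧
      K' ⊆ H₁ ∧ K'' ⊆ H₂

set_option linter.unusedSectionVars false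
namespace Bus

class BSurf (S : Type*) [MetricSpace S] : Prop where
  bus : IsBusemannSpace S
  homeo : Nonempty (S ≃ₜ (ℝ × ℝ))

section P1
variable {S : Type*} [MetricSpace S] [BSurf S]

noncomputable def gam (x y : S) : ℝ → S := ((BSurf.bus (S := S)).1 x y).choose
theorem gam_spec (x y : S) : IsGeodesicFromTo (gam x y) x y := ((BSurf.bus (S := S)).1 x y).choose_spec

noncomputable def clp (s : ℝ) : ℝ := max 0 (min 1 s)
theorem clp_mem (s : ℝ) : clp s ∈ Icc (0:ℝ) 1 := by
  unfold clp; constructor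
  · exact le_max_left _ _
  · exact max_le (by norm_num) (min_le_left _ _)
theorem clp_of_mem {s : ℝ} (h : s ∈ Icc (0:ℝ) 1) : clp s = s := by
  unfold clp; rw [min_eq_right h.2, max_eq_right h.1]
theorem clp_lip (s t : ℝ) : |clp s - clp t| ≤ |s - t| := by
  unfold clp
  refine (abs_max_sub_max_le_max _ _ _ _).trans ?_
  simp only [sub_self, abs_zero]
  refine max_le (abs_nonneg _) ((abs_min_sub_min_le_max _ _ _ _).trans ?_)
  simp
theorem clp_cont : Continuous clp := by unfold clp; fun_prop

noncomputable def geo (x y : S) (s : ℝ) : S := gam x y (clp s * dist x y)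

theorem geo_clp (x y : S) (s : ℝ) : geo x y (clp s) = geo x y s := by
  unfold geo; rw [clp_of_mem (clp_mem s)]

theorem geo_zero (x y : S) : geo x y 0 = x := by
  unfold geo; rw [clp_of_mem (by simp), zero_mul]; exact (gam_spec x y).2.1
theorem geo_one (x y : S) : geo x y 1 = y := by
  unfold geo; rw [clp_of_mem (by simp), one_mul]; exact (gam_spec x y).2.2

theorem dist_geo (x y : S) {s t : ℝ} (hs : s ∈ Icc (0:ℝ) 1) (ht : t ∈ Icc (0:ℝ) 1) :
    dist (geo x y s) (geo x y t) = |s - t| * dist x y := by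
  unfold geo; rw [clp_of_mem hs, clp_of_mem ht]
  have hd : 0 ≤ dist x y := dist_nonneg
  rw [(gam_spec x y).1 _ ⟨mul_nonneg hs.1 hd, mul_le_of_le_one_left hd hs.2⟩ _
    ⟨mul_nonneg ht.1 hd, mul_le_of_le_one_left hd ht.2⟩, ← sub_mul, abs_mul, abs_of_nonneg hd]

theorem dist_geo_left (x y : S) {s : ℝ} (hs : s ∈ Icc (0:ℝ) 1) :
    dist x (geo x y s) = s * dist x y := by
  have := dist_geo x y (s := 0) (t := s) (by simp) hs
  rw [geo_zero] at this; rw [this]; simp [abs_of_nonneg hs.1]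
theorem dist_geo_right (x y : S) {s : ℝ} (hs : s ∈ Icc (0:ℝ) 1) :
    dist (geo x y s) y = (1 - s) * dist x y := by
  have := dist_geo x y (s := s) (t := 1) hs (by simp)
  rw [geo_one] at this; rw [this, abs_sub_comm, abs_of_nonneg (by linarith [hs.2])]

theorem conv_gen (γ γ' : ℝ → S) (a b a' b' : ℝ) (h : a ≤ b) (h' : a' ≤ b')
    (hg : IsGeodesicOn γ a b) (hg' : IsGeodesicOn γ' a' b') {s : ℝ} (hs : s ∈ Icc (0:ℝ) 1) :
    dist (γ ((1 - s) * a + s * b)) (γ' ((1 - s) * a' + s * b')) ≤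
      (1 - s) * dist (γ a) (γ' a') + s * dist (γ b) (γ' b') := by
  obtain ⟨-, hc⟩ := (BSurf.bus (S := S)).2 γ γ' a b a' b' h h' hg hg'
  have := hc (x := 0) (by simp) (y := 1) (by simp)
    (a := 1 - s) (b := s) (by linarith [hs.2]) hs.1 (by ring)
  simpa using this

theorem geo_conv (x y x' y' : S) {s : ℝ} (hs : s ∈ Icc (0:ℝ) 1) :
    dist (geo x y s) (geo x' y' s) ≤ (1 - s) * dist x x' + s * dist y y' := by
  have := conv_gen (gam x y) (gam x' y') 0 (dist x y) 0 (dist x' y') dist_nonneg dist_nonneg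
    (gam_spec x y).1 (gam_spec x' y').1 hs
  rw [(gam_spec x y).2.1, (gam_spec x y).2.2, (gam_spec x' y').2.1, (gam_spec x' y').2.2] at this
  unfold geo; rw [clp_of_mem hs]; simpa using this

def Btw (x m y : S) : Prop := dist x m + dist m y = dist x y

theorem concat (x m y : S) (h : Btw x m y) :
    ∃ γ, IsGeodesicFromTo γ x y ∧ γ (dist x m) = m := by
  unfold Btw at h
  obtain ⟨g1, g10, g11⟩ := gam_spec x m
  obtain ⟨g2, g20, g21⟩ := gam_spec m y
  have key : ∀ s t, 0 ≤ s → s ≤ dist x m → dist x m < t → t ≤ dist x y →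
      dist (gam x m s) (gam m y (t - dist x m)) = t - s := by
    intro s t h0 h1 h2 h3
    have e1 : dist (gam x m s) m = dist x m - s := by
      have := g1 _ ⟨h0, h1⟩ _ ⟨dist_nonneg, le_rfl⟩
      rw [g11, abs_sub_comm, abs_of_nonneg (by linarith)] at this; exact this
    have e2 : dist x (gam x m s) = s := by
      have := g1 _ ⟨le_rfl, dist_nonneg⟩ _ ⟨h0, h1⟩
      rw [g10, abs_sub_comm, abs_of_nonneg (by linarith)] at this; linarith
    have e3 : dist m (gam m y (t - dist x m)) = t - dist x m := by
      have := g2 _ ⟨le_rfl, dist_nonneg⟩ (t - dist x m) ⟨by linarith, by linarith⟩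
      rw [g20, abs_sub_comm, abs_of_nonneg (by linarith)] at this; linarith
    have e4 : dist (gam m y (t - dist x m)) y = dist m y - (t - dist x m) := by
      have := g2 (t - dist x m) ⟨by linarith, by linarith⟩ _ ⟨dist_nonneg, le_rfl⟩
      rw [g21, abs_sub_comm, abs_of_nonneg (by linarith)] at this; linarith
    have t1 := dist_triangle (gam x m s) m (gam m y (t - dist x m))
    have t2 := dist_triangle x (gam x m s) (gam m y (t - dist x m))
    have t3 := dist_triangle x (gam m y (t - dist x m)) y
    linarith
  refine ⟨fun u => if u ≤ dist x m then gam x m u else gam m y (u - dist x m), ⟨?_, ?_, ?_⟩, ?_⟩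
  · intro s hs t ht
    dsimp only
    by_cases h1 : s ≤ dist x m <;> by_cases h2 : t ≤ dist x m
    · rw [if_pos h1, if_pos h2]; exact g1 _ ⟨hs.1, h1⟩ _ ⟨ht.1, h2⟩
    · rw [if_pos h1, if_neg h2, key s t hs.1 h1 (by linarith) ht.2, abs_sub_comm, abs_of_nonneg (by linarith)]
    · rw [if_neg h1, if_pos h2, dist_comm, key t s ht.1 h2 (by linarith) hs.2, abs_of_nonneg (by linarith)]
    · rw [if_neg h1, if_neg h2, g2 _ ⟨by linarith, by linarith [hs.2]⟩ _ ⟨by linarith, by linarith [ht.2]⟩]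
      congr 1; ring
  · simp only [dist_nonneg, if_true]; exact g10
  · dsimp only
    split_ifs with h1
    · have : dist m y = 0 := le_antisymm (by linarith) dist_nonneg
      have e : m = y := dist_eq_zero.1 this
      subst e; exact g11
    · rw [show dist x y - dist x m = dist m y by linarith]; exact g21
  · simp only [le_refl, if_true]; exact g11

theorem geo_uniq {x y m : S} {s : ℝ} (hs : s ∈ Icc (0:ℝ) 1) (h1 : dist x m = s * dist x y)
    (h2 : dist m y = (1 - s) * dist x y) : m = geo x y s := by
  obtain ⟨γ, ⟨hg, g0, g1⟩, gm⟩ := concat x m y (by unfold Btw; rw [h1, h2]; ring)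
  have := conv_gen γ (gam x y) 0 (dist x y) 0 (dist x y) dist_nonneg dist_nonneg hg (gam_spec x y).1 hs
  rw [g0, g1, (gam_spec x y).2.1, (gam_spec x y).2.2] at this
  simp only [dist_self, mul_zero, zero_add] at this
  rw [← h1, gm, h1] at this
  unfold geo; rw [clp_of_mem hs]
  exact dist_le_zero.1 this

theorem btw_geo (x y : S) (s : ℝ) : Btw x (geo x y s) y := by
  rw [← geo_clp]; unfold Btw; rw [dist_geo_left _ _ (clp_mem s), dist_geo_right _ _ (clp_mem s)]; ring

theorem btw_iff {x m y : S} : Btw x m y ↔ ∃ s ∈ Icc (0:ℝ) 1, m = geo x y s := by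
  constructor
  · intro h
    have hh := h
    unfold Btw at h
    have a1 : 0 ≤ dist x m := dist_nonneg
    have a2 : 0 ≤ dist m y := dist_nonneg
    by_cases h0 : dist x y = 0
    · refine ⟨0, by simp, ?_⟩
      rw [geo_zero]; exact (dist_eq_zero.1 (by linarith)).symm
    · have hp : 0 < dist x y := lt_of_le_of_ne dist_nonneg (Ne.symm h0)
      have hs : dist x m / dist x y ∈ Icc (0:ℝ) 1 := ⟨by positivity, by rw [div_le_one hp]; linarith⟩
      refine ⟨_, hs, geo_uniq hs (by field_simp) (by field_simp; linarith)⟩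
  · rintro ⟨s, -, rfl⟩; exact btw_geo _ _ _

theorem btw_symm {x m y : S} (h : Btw x m y) : Btw y m x := by
  unfold Btw at *; rw [dist_comm y m, dist_comm m x, dist_comm y x]; linarith
theorem btw_left (x y : S) : Btw x x y := by simp [Btw]
theorem btw_right (x y : S) : Btw x y y := by simp [Btw]
theorem btw_self {x m : S} (h : Btw x m x) : m = x := by
  unfold Btw at h; rw [dist_self, dist_comm m x] at h
  exact (dist_eq_zero.1 (by linarith [dist_nonneg (x := x) (y := m)])).symm

theorem geo_self (x : S) (s : ℝ) : geo x x s = x := btw_self (btw_geo x x s)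

theorem clp_symm (s : ℝ) : clp (1 - s) = 1 - clp s := by
  unfold clp
  rcases le_total s 0 with h | h <;> rcases le_total s 1 with h' | h' <;>
   simp [max_def, min_def] <;> split_ifs <;> linarith

theorem geo_symm (x y : S) (s : ℝ) : geo y x s = geo x y (1 - s) := by
  rw [← geo_clp y x, ← geo_clp x y, clp_symm]
  have hm := clp_mem s
  apply geo_uniq ⟨by linarith [hm.2], by linarith [hm.1]⟩
  · rw [dist_comm, dist_geo_right _ _ hm, dist_comm y x]
  · rw [dist_comm, dist_geo_left _ _ hm, dist_comm y x]; ring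

/-- inner transitivity -/
theorem btw_trans_left {a b c e : S} (h : Btw a b c) (h' : Btw a c e) : Btw a b e ∧ Btw b c e := by
  unfold Btw at *
  have := dist_triangle a b e
  have := dist_triangle b c e
  constructor <;> linarith
theorem btw_trans_right {a b c e : S} (h : Btw a b e) (h' : Btw b c e) : Btw a c e ∧ Btw a b c := by
  unfold Btw at *
  have := dist_triangle a c e
  have := dist_triangle a b c
  constructor <;> linarith
theorem btw_antisymm {a b c : S} (h : Btw a b c) (h' : Btw a c b) : b = c := by
  unfold Btw at *
  rw [dist_comm c b] at h'
  exact dist_eq_zero.1 (by linarith)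

theorem btw_geo_geo (a c : S) {s t : ℝ} (hs : s ∈ Icc (0:ℝ) 1) (ht : t ∈ Icc (0:ℝ) 1) (h : s ≤ t) :
    Btw a (geo a c s) (geo a c t) := by
  unfold Btw
  rw [dist_geo_left _ _ hs, dist_geo_left _ _ ht, dist_geo _ _ hs ht, abs_sub_comm, abs_of_nonneg (by linarith)]
  ring

theorem geo_geo_left (a c : S) {s t : ℝ} (hs : s ∈ Icc (0:ℝ) 1) (ht : t ∈ Icc (0:ℝ) 1) :
    geo a (geo a c t) s = geo a c (s * t) := by
  symm
  have hst : s * t ∈ Icc (0:ℝ) 1 := ⟨mul_nonneg hs.1 ht.1, mul_le_one₀ hs.2 ht.1 ht.2⟩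
  apply geo_uniq hs
  · rw [dist_geo_left _ _ hst, dist_geo_left _ _ ht]; ring
  · rw [dist_geo _ _ hst ht, dist_geo_left _ _ ht, abs_sub_comm, abs_of_nonneg (by nlinarith [hs.2, ht.1])]; ring

theorem btw_total {a b c e : S} (h : Btw a b e) (h' : Btw a c e) : Btw a b c ∨ Btw a c b := by
  obtain ⟨s, hs, rfl⟩ := btw_iff.1 h
  obtain ⟨t, ht, rfl⟩ := btw_iff.1 h'
  rcases le_total s t with h | h
  · exact Or.inl (btw_geo_geo _ _ hs ht h)
  · exact Or.inr (btw_geo_geo _ _ ht hs h)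

/-- two points between the same ends: segment between them is inside -/
theorem btw_sub {a b c e f : S} (h : Btw a b e) (h' : Btw a c e) (hf : Btw b f c) : Btw a f e := by
  rcases btw_total h h' with h1 | h1
  · exact (btw_trans_left (btw_trans_right h1 hf).1 h').1
  · exact (btw_trans_left (btw_trans_right h1 (btw_symm hf)).1 h).1

theorem geo_lip (x y x' y' : S) (s t : ℝ) : dist (geo x y s) (geo x' y' t) ≤
    dist x x' + dist y y' + |s - t| * dist x' y' := by
  rw [← geo_clp x y s, ← geo_clp x' y' t]
  have h1 := geo_conv x y x' y' (clp_mem s)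
  have h2 := dist_geo x' y' (clp_mem s) (clp_mem t)
  have h3 := dist_triangle (geo x y (clp s)) (geo x' y' (clp s)) (geo x' y' (clp t))
  have h4 := clp_lip s t
  have h5 := clp_mem s
  have := mul_le_mul_of_nonneg_right h4 (dist_nonneg (x := x') (y := y'))
  nlinarith [dist_nonneg (x := x) (y := x'), dist_nonneg (x := y) (y := y'), h5.1, h5.2]

theorem continuous_geo' : Continuous (fun p : S × S × ℝ => geo p.1 p.2.1 p.2.2) := by
  rw [continuous_iff_continuousAt]
  rintro ⟨x', y', t⟩
  rw [ContinuousAt, tendsto_iff_dist_tendsto_zero]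
  refine squeeze_zero (fun _ => dist_nonneg) (fun p => geo_lip p.1 p.2.1 x' y' p.2.2 t) ?_
  have : Continuous fun p : S × S × ℝ => dist p.1 x' + dist p.2.1 y' + |p.2.2 - t| * dist x' y' := by
    fun_prop
  have := this.tendsto (x', y', t)
  simpa using this

theorem continuous_geo {X : Type*} [TopologicalSpace X] {f g : X → S} {k : X → ℝ}
    (hf : Continuous f) (hg : Continuous g) (hk : Continuous k) :
    Continuous fun x => geo (f x) (g x) (k x) :=
  continuous_geo'.comp (hf.prodMk (hg.prodMk hk))

/-- local geodesics are geodesics -/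
theorem local_geo {b e a c : S} (h : Btw b e a) (h' : Btw e a c) (hea : e ≠ a) : Btw b a c := by
  have hea' : 0 < dist e a := dist_pos.2 hea
  have hab : 0 < dist a b := by
    unfold Btw at h; rw [dist_comm a b]; linarith [dist_nonneg (x := b) (y := e)]
  set s : ℝ := dist e a / dist a b with hs
  have hs0 : 0 < s := by positivity
  have hs1 : s ≤ 1 := by
    rw [hs, div_le_one hab]; unfold Btw at h; rw [dist_comm a b]; linarith [dist_nonneg (x := b) (y := e)]
  have hsI : s ∈ Icc (0:ℝ) 1 := ⟨hs0.le, hs1⟩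
  have e1 : e = geo a b s := by
    apply geo_uniq hsI
    · rw [hs, dist_comm]; field_simp
    · unfold Btw at h; rw [hs, dist_comm e b]; field_simp; rw [dist_comm a b]; linarith
  have h2 := geo_conv a b a c hsI
  rw [← e1] at h2
  simp only [dist_self, mul_zero, zero_add] at h2
  have h3 : Btw e a (geo a c s) := (btw_trans_right h' (btw_geo a c s)).2
  unfold Btw at h3 ⊢
  rw [dist_geo_left _ _ hsI] at h3
  rw [← h3] at h2
  have : dist e a = s * dist a b := by rw [hs]; field_simp
  rw [this] at h2
  have h4 : dist a b + dist a c ≤ dist b c := by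
    by_contra hc; push Not at hc; nlinarith
  have := dist_triangle b a c
  rw [dist_comm a b] at h4; linarith

def Noncol (a b c : S) : Prop := ¬ Btw a b c ∧ ¬ Btw b c a ∧ ¬ Btw c a b

theorem Noncol.rot {a b c : S} (h : Noncol a b c) : Noncol b c a := ⟨h.2.1, h.2.2, h.1⟩
theorem Noncol.swap {a b c : S} (h : Noncol a b c) : Noncol b a c :=
  ⟨fun k => h.2.2 (btw_symm k), fun k => h.2.1 (btw_symm k), fun k => h.1 (btw_symm k)⟩
theorem Noncol.swap23 {a b c : S} (h : Noncol a b c) : Noncol a c b := h.rot.swap.rot.rot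
theorem Noncol.ne12 {a b c : S} (h : Noncol a b c) : a ≠ b := by
  rintro rfl; exact h.1 (btw_left _ _)
theorem Noncol.ne23 {a b c : S} (h : Noncol a b c) : b ≠ c := h.rot.ne12
theorem Noncol.ne31 {a b c : S} (h : Noncol a b c) : c ≠ a := h.rot.rot.ne12

end P1
end Bus
set_option linter.unusedSectionVars false
namespace Bus
section P2
variable {S : Type*} [MetricSpace S] [BSurf S]

noncomputable def hE (S : Type*) [MetricSpace S] [BSurf S] : S ≃ₜ ℂ :=
  (BSurf.homeo (S := S)).some.trans Complex.equivRealProdCLM.symm.toHomeomorph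

theorem exists_log {X : Type*} [TopologicalSpace X] [LocallyPathConnectedSpace X]
    [SimplyConnectedSpace X] (f : X → ℂ) (hf : Continuous f) (h0 : ∀ x, f x ≠ 0) :
    ∃ g : X → ℂ, Continuous g ∧ ∀ x, Complex.exp (g x) = f x := by
  have x₀ : X := Classical.choice inferInstance
  obtain ⟨g, ⟨-, hg⟩, -⟩ := Complex.isCoveringMapOn_exp.existsUnique_continuousMap_lifts
    (⟨f, hf⟩ : C(X, ℂ)) (a₀ := x₀) (Complex.exp_log (h0 x₀)) (fun x => h0 x)
  exact ⟨g, g.continuous, fun x => congrFun hg x⟩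

theorem log_unique (g g' : ℝ → ℂ) (hg : Continuous g) (hg' : Continuous g')
    (h : ∀ x, Complex.exp (g x) = Complex.exp (g' x)) : g 1 - g 0 = g' 1 - g' 0 := by
  have := Complex.isCoveringMap_exp.eq_of_comp_eq (g₁ := g) (g₂ := fun x => g' x + (g 0 - g' 0)) hg
    (by fun_prop) (by
      ext x
      simp only [Function.comp]
      rw [Complex.exp_add, Complex.exp_sub, h 0, h x]
      simp) 0 (by simp)
  have := congrFun this 1
  rw [this]; ring

open Classical in
noncomputable def dang (f : ℝ → ℂ) : ℝ :=
  if h : ∃ g : ℝ → ℂ, Continuous g ∧ ∀ x, Complex.exp (g x) = f x then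
    (h.choose 1 - h.choose 0).im else 0

theorem dang_eq {f g : ℝ → ℂ} (hg : Continuous g) (h : ∀ x, Complex.exp (g x) = f x) :
    dang f = (g 1 - g 0).im := by
  have hex : ∃ g : ℝ → ℂ, Continuous g ∧ ∀ x, Complex.exp (g x) = f x := ⟨g, hg, h⟩
  unfold dang
  rw [dif_pos hex]
  rw [log_unique _ g hex.choose_spec.1 hg (fun x => by rw [hex.choose_spec.2, h])]

noncomputable def th (p q r : S) : ℝ := dang (fun s => hE S (geo q r s) - hE S p)

theorem th_eq {p q r : S} {g : ℝ → ℂ} (hg : Continuous g)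
    (h : ∀ s, Complex.exp (g s) = hE S (geo q r s) - hE S p) : th p q r = (g 1 - g 0).im :=
  dang_eq hg h

theorem hE_sub_ne {x y : S} (h : x ≠ y) : hE S x - hE S y ≠ 0 :=
  sub_ne_zero.2 (fun e => h ((hE S).injective e))

theorem geo_ne {p q r : S} (h : ¬ Btw q p r) (s : ℝ) : geo q r s ≠ p := by
  rintro rfl; exact h (btw_geo _ _ _)

theorem th_swap {p q r : S} (h : ¬ Btw q p r) : th p r q = - th p q r := by
  obtain ⟨g, hg, he⟩ := exists_log (fun s : ℝ => hE S (geo q r s) - hE S p)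
    (((hE S).continuous.comp (continuous_geo continuous_const continuous_const continuous_id)).sub
      continuous_const) (fun s => hE_sub_ne (geo_ne h s))
  rw [th_eq hg he, th_eq (g := fun s => g (1 - s)) (by fun_prop) (fun s => by rw [he, geo_symm q r])]
  simp

theorem th_exp {p q r : S} (h : ¬ Btw q p r) : ∃ D : ℂ, D.im = th p q r ∧
    Complex.exp D = (hE S r - hE S p) / (hE S q - hE S p) := by
  obtain ⟨g, hg, he⟩ := exists_log (fun s : ℝ => hE S (geo q r s) - hE S p)
    (((hE S).continuous.comp (continuous_geo continuous_const continuous_const continuous_id)).sub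
      continuous_const) (fun s => hE_sub_ne (geo_ne h s))
  refine ⟨g 1 - g 0, (th_eq hg he).symm, ?_⟩
  rw [Complex.exp_sub, he, he, geo_one, geo_zero]

noncomputable def AA (p q r : S) : ℝ := th p q r + th q r p + th r p q
noncomputable def SS (t p q r : S) : ℝ := th t p q + th t q r + th t r p

noncomputable def kk (p q r : S) : ℤ := ⌊AA p q r / (2 * Real.pi)⌋

theorem AA_odd {p q r : S} (h : Noncol p q r) : ∃ k : ℤ, AA p q r = (2 * k + 1) * Real.pi := by
  obtain ⟨D1, i1, e1⟩ := th_exp (p := p) (q := q) (r := r) (fun k => h.2.2 (btw_symm k))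
  obtain ⟨D2, i2, e2⟩ := th_exp (p := q) (q := r) (r := p) (fun k => h.1 (btw_symm k))
  obtain ⟨D3, i3, e3⟩ := th_exp (p := r) (q := p) (r := q) (fun k => h.2.1 (btw_symm k))
  have n1 := hE_sub_ne h.ne12
  have n2 := hE_sub_ne h.ne23
  have n3 := hE_sub_ne h.ne31
  have n1' := hE_sub_ne h.ne12.symm
  have n2' := hE_sub_ne h.ne23.symm
  have n3' := hE_sub_ne h.ne31.symm
  have : Complex.exp (D1 + D2 + D3) = Complex.exp (Real.pi * Complex.I) := by
    rw [Complex.exp_add, Complex.exp_add, e1, e2, e3, Complex.exp_pi_mul_I]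
    field_simp; ring
  rw [Complex.exp_eq_exp_iff_exists_int] at this
  obtain ⟨n, hn⟩ := this
  have := congrArg Complex.im hn
  simp at this
  exact ⟨n, by unfold AA; rw [← i1, ← i2, ← i3, this]; ring⟩

theorem AA_kk {p q r : S} (h : Noncol p q r) : AA p q r = (2 * kk p q r + 1) * Real.pi := by
  obtain ⟨k, hk⟩ := AA_odd h
  have : kk p q r = k := by
    unfold kk; rw [hk, Int.floor_eq_iff]
    have := Real.pi_pos
    have e : (2 * (k:ℝ) + 1) * Real.pi / (2 * Real.pi) = k + 1/2 := by field_simp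
    rw [e]; constructor <;> linarith
  rw [hk, this]

noncomputable def eps (p q r : S) : Bool := decide (Even (kk p q r))

theorem eps_rot (p q r : S) : eps p q r = eps q r p := by
  unfold eps kk AA
  rw [show th p q r + th q r p + th r p q = th q r p + th r p q + th p q r by ring]

theorem AA_swap {p q r : S} (h : Noncol p q r) : AA q p r = - AA p q r := by
  unfold AA
  rw [th_swap (p := p) (q := q) (r := r) (fun k => h.2.2 (btw_symm k)),
    th_swap (p := q) (q := r) (r := p) (fun k => h.1 (btw_symm k)),
    th_swap (p := r) (q := p) (r := q) (fun k => h.2.1 (btw_symm k))]; ring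

theorem eps_swap {p q r : S} (h : Noncol p q r) : eps q p r = !eps p q r := by
  have h1 := AA_kk h
  have h2 := AA_kk h.swap
  rw [AA_swap h, h1] at h2
  have hp := Real.pi_pos
  have : (2 * (kk q p r:ℝ) + 1) = -(2 * (kk p q r : ℝ) + 1) := by
    have : ((2 * (kk q p r:ℝ) + 1) + (2 * (kk p q r : ℝ) + 1)) * Real.pi = 0 := by linarith
    rcases mul_eq_zero.1 this with h | h <;> linarith
  have h3 : 2 * (kk q p r) + 1 = -(2 * (kk p q r) + 1) := by exact_mod_cast this
  have h4 : kk q p r = - kk p q r - 1 := by omega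
  unfold eps; rw [h4]
  by_cases he : Even (kk p q r)
  · rw [decide_eq_true he, decide_eq_false]; rfl
    rw [Int.even_iff] at *; omega
  · rw [decide_eq_false he, decide_eq_true]; rfl
    rw [Int.even_iff] at *; omega

theorem eps_swap23 {p q r : S} (h : Noncol p q r) : eps p r q = !eps p q r := by
  rw [eps_rot p r q, eps_rot r q p, ← eps_swap h]

theorem SS_rot (t p q r : S) : SS t p q r = SS t q r p := by unfold SS; ring

theorem SS_cocycle {t p q r s : S} (hp : ¬ Btw s t p) (hq : ¬ Btw s t q) (hr : ¬ Btw s t r) :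
    SS t p q r = SS t s p q + SS t s q r + SS t s r p := by
  unfold SS
  rw [th_swap hp, th_swap hq, th_swap hr]; ring

theorem dang_const (f : ℝ → ℂ) (c : ℂ) (h0 : c ≠ 0) (h : ∀ s, f s = c) : dang f = 0 := by
  rw [dang_eq (g := fun _ => Complex.log c) continuous_const (fun s => by rw [h, Complex.exp_log h0])]
  simp

theorem lemW {t p q r : S}
    (hf : ∀ z, Btw q z r → ¬ Btw p t z) : SS t p q r = 0 := by
  have hpq : ¬ Btw p t q := hf q (btw_left _ _)
  have hpr : ¬ Btw p t r := hf r (btw_right _ _)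
  have htp : t ≠ p := by rintro rfl; exact hpq (btw_left _ _)
  obtain ⟨G, hG, he⟩ := exists_log (fun x : ℝ × ℝ => hE S (geo p (geo q r x.1) x.2) - hE S t)
    (((hE S).continuous.comp (continuous_geo continuous_const
      (continuous_geo continuous_const continuous_const continuous_fst) continuous_snd)).sub
      continuous_const) (fun x => hE_sub_ne (geo_ne (hf _ (btw_geo _ _ _)) _))
  have e1 : th t p q = (G (0,1) - G (0,0)).im :=
    th_eq (g := fun s => G (0, s)) (by fun_prop) (fun s => by rw [he]; simp only [geo_zero])
  have e2 : th t q r = (G (1,1) - G (0,1)).im :=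
    th_eq (g := fun s => G (s, 1)) (by fun_prop) (fun s => by rw [he]; simp only [geo_one])
  have e3 : th t p r = (G (1,1) - G (1,0)).im :=
    th_eq (g := fun s => G (1, s)) (by fun_prop) (fun s => by rw [he]; simp only [geo_one])
  have e4 : 0 = (G (1,0) - G (0,0)).im := by
    refine (dang_const (fun _ => hE S p - hE S t) _ (hE_sub_ne htp.symm) (fun _ => rfl)).symm.trans ?_
    exact dang_eq (g := fun s => G (s, 0)) (by fun_prop) (fun s => by rw [he]; simp only [geo_zero])
  unfold SS
  rw [th_swap hpr, e1, e2, e3]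
  simp only [Complex.sub_im] at *
  linarith

/-- Relation R. -/
theorem relR {t p q r : S} (h : Noncol p q r) (h1 : Noncol t p q) (h2 : Noncol t q r)
    (h3 : Noncol t r p) (s0 : SS t p q r = 0) (s1 : SS p q t r = 0) (s2 : SS q r t p = 0)
    (s3 : SS r p t q = 0) : eps p q r = !((eps t p q) ^^ (eps t q r) ^^ (eps t r p)) := by
  have key : AA t p q + AA t q r + AA t r p - AA p q r = 0 := by
    rw [show (0:ℝ) = SS t p q r + SS p q t r + SS q r t p + SS r p t q by rw [s0, s1, s2, s3]; ring]
    unfold AA SS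
    rw [th_swap (p := p) (q := q) (r := r) (fun k => h.2.2 (btw_symm k)),
    th_swap (p := q) (q := r) (r := p) (fun k => h.1 (btw_symm k)),
    th_swap (p := r) (q := p) (r := q) (fun k => h.2.1 (btw_symm k))]
    ring
  rw [AA_kk h, AA_kk h1, AA_kk h2, AA_kk h3] at key
  have hp := Real.pi_pos
  have : ((2 * (kk t p q:ℝ) + 1) + (2 * (kk t q r:ℝ) + 1) + (2 * (kk t r p:ℝ) + 1) - (2 * (kk p q r:ℝ) + 1)) * Real.pi = 0 := by linarith
  have h4 : (2 * (kk t p q:ℝ) + 1) + (2 * (kk t q r:ℝ) + 1) + (2 * (kk t r p:ℝ) + 1) - (2 * (kk p q r:ℝ) + 1) = 0 := by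
    rcases mul_eq_zero.1 this with h | h <;> linarith
  have h5 : (2 * (kk t p q) + 1) + (2 * (kk t q r) + 1) + (2 * (kk t r p) + 1) - (2 * (kk p q r) + 1) = 0 := by
    exact_mod_cast h4
  have h6 : kk p q r = kk t p q + kk t q r + kk t r p + 1 := by omega
  unfold eps
  rw [h6]
  by_cases a : Even (kk t p q) <;> by_cases b : Even (kk t q r) <;> by_cases c : Even (kk t r p) <;>
    simp [a, b, c] <;> simp only [Int.even_iff, Int.odd_iff] at a b c ⊢ <;> omega

/-- Lemma C. -/
theorem lemC' {a b : S} {x : ℝ → S} (hx : Continuous x) (hn : ∀ τ, Noncol a b (x τ)) :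
    eps a b (x 0) = eps a b (x 1) := by
  have hlog : ∀ (u v w : ℝ → S), Continuous u → Continuous v → Continuous w →
      (∀ τ, ¬ Btw (v τ) (u τ) (w τ)) → Continuous fun τ => th (u τ) (v τ) (w τ) := by
    intro u v w hu hv hw hn
    obtain ⟨G, hG, he⟩ := exists_log (fun x : ℝ × ℝ => hE S (geo (v x.1) (w x.1) x.2) - hE S (u x.1))
      (((hE S).continuous.comp (continuous_geo (hv.comp continuous_fst)
       (hw.comp continuous_fst) continuous_snd)).sub
      ((hE S).continuous.comp (hu.comp continuous_fst))) (fun x => hE_sub_ne (geo_ne (hn _) _))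
    have : (fun τ => th (u τ) (v τ) (w τ)) = fun τ => (G (τ, 1) - G (τ, 0)).im := by
      ext τ
      exact th_eq (g := fun s => G (τ, s)) (by fun_prop) (fun s => he _)
    rw [this]
    fun_prop
  have hA : Continuous fun τ => AA a b (x τ) := by
    unfold AA
    refine ((hlog _ _ _ continuous_const continuous_const hx ?_).add
      (hlog _ _ _ continuous_const hx continuous_const ?_)).add
      (hlog _ _ _ hx continuous_const continuous_const ?_)
    · exact fun τ k => (hn τ).2.2 (btw_symm k)
    · exact fun τ k => (hn τ).1 (btw_symm k)
    · exact fun τ k => (hn τ).2.1 (btw_symm k)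
  have hk : Continuous fun τ => kk a b (x τ) := by
    rw [Int.isClosedEmbedding_coe_real.isEmbedding.continuous_iff]
    have : ((fun z : ℤ => (z : ℝ)) ∘ fun τ => kk a b (x τ)) = fun τ => (AA a b (x τ) / Real.pi - 1) / 2 := by
      ext τ
      have hp := Real.pi_pos
      simp only [Function.comp]
      rw [AA_kk (hn τ)]; field_simp; ring
    rw [this]; fun_prop
  unfold eps
  rw [PreconnectedSpace.constant inferInstance hk (x := 0) (y := 1)]

theorem lemC {a b : S} {x : ℝ → S} {s t : ℝ} (hst : s ≤ t) (hx : ContinuousOn x (Icc s t))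
    (hn : ∀ τ ∈ Icc s t, Noncol a b (x τ)) :
    eps a b (x s) = eps a b (x t) := by
  have hm : ∀ τ, s + clp τ * (t - s) ∈ Icc s t := fun τ => by
    have := clp_mem τ
    constructor <;> nlinarith [this.1, this.2]
  have := lemC' (a := a) (b := b) (x := fun τ => x (s + clp τ * (t - s)))
    (hx.comp_continuous (by have := clp_cont; fun_prop) hm) (fun τ => hn _ (hm τ))
  simpa [clp_of_mem] using this

end P2
end Bus
set_option linter.unusedSectionVars false
namespace Bus
section P3
variable {S : Type*} [MetricSpace S] [BSurf S]

theorem eps_all {a b c : S} (h : Noncol a b c) : eps b c a = eps a b c ∧ eps c a b = eps a b c ∧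
    eps b a c = (!eps a b c) ∧ eps a c b = (!eps a b c) ∧ eps c b a = !eps a b c := by
  refine ⟨(eps_rot a b c).symm, eps_rot c a b, eps_swap h, eps_swap23 h, ?_⟩
  rw [eps_rot c b a, eps_swap h]

theorem T1 {a b x y : S} (h : eps a b x ≠ eps a b y) :
    ∃ z, Btw x z y ∧ (Btw a b z ∨ Btw b z a ∨ Btw z a b) := by
  by_contra hc
  push Not at hc
  apply h
  have := lemC (a := a) (b := b) (x := fun s => geo x y s) (s := 0) (t := 1) (by norm_num)
    (continuous_geo continuous_const continuous_const continuous_id).continuousOn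
    (fun τ _ => hc _ (btw_geo _ _ _))
  simpa [geo_zero, geo_one] using this

theorem T2n {a b c b' : S} (h : Noncol a b c) (hb : Btw a b b') : Noncol a b' c := by
  refine ⟨fun k => h.1 (btw_trans_left hb k).1, fun k => ?_, fun k => h.2.2 (btw_trans_right k hb).2⟩
  rcases btw_total hb (btw_symm k) with h1 | h1
  · exact h.1 h1
  · exact h.2.1 (btw_symm h1)

theorem T2 {a b c b' : S} (h : Noncol a b c) (hb : Btw a b b') : eps a b c = eps a b' c := by
  have := lemC (a := c) (b := a) (x := fun s => geo b b' s) (s := 0) (t := 1) (by norm_num)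
    (continuous_geo continuous_const continuous_const continuous_id).continuousOn
    (fun τ _ => (T2n h (btw_trans_right hb (btw_geo b b' τ)).2).rot.rot)
  simp only [geo_zero, geo_one] at this
  rw [← eps_rot c a b, ← eps_rot c a b', this]

theorem T3 {x y z w : S} (hb : Btw x y z) (h : Noncol x y w) (h' : Noncol y z w) :
    eps x y w = eps y z w := by
  have e1 := T2 h hb
  have e2 := T2 h'.swap (btw_symm hb)
  have e3 := eps_all (T2n h hb)
  have e4 := eps_all h'
  grind

theorem FL {p q r t z : S} (hz : Btw q z r) (ht : Btw p t z) (h : Noncol p q t) :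
    eps p q t = eps p q r := by
  have h1 := h.swap23
  have h2 := T2n h1 ht
  have e1 := T2 h1 ht
  have h3 : Noncol q z p := h2.rot.swap
  have e3 := T2 h3 hz
  have a1 := eps_all h1
  have a2 := eps_all h2
  have a3 := eps_all (T2n h3 hz)
  grind

theorem SS_fan {t p q r : S} (h : SS t p q r ≠ 0) : ∃ z, Btw q z r ∧ Btw p t z := by
  by_contra hc; push Not at hc; exact h (lemW hc)

theorem IL {t p q r : S} {e : Bool} (h : Noncol p q r) (h1 : Noncol t p q) (h2 : Noncol t q r)
    (h3 : Noncol t r p) (e0 : eps p q r = e) (e1 : eps t p q = e) (e2 : eps t q r = e)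
    (e3 : eps t r p = e) : SS t p q r ≠ 0 := by
  intro h0
  have a0 := eps_all h
  have a1 := eps_all h1
  have a2 := eps_all h2
  have a3 := eps_all h3
  have s1 : SS p q t r = 0 := by
    by_contra hc
    obtain ⟨z, hz, hp⟩ := SS_fan hc
    have := FL hz hp h1.rot.rot.swap23.swap23
    grind
  have s2 : SS q r t p = 0 := by
    by_contra hc
    obtain ⟨z, hz, hp⟩ := SS_fan hc
    have := FL hz hp h2.rot.rot
    grind
  have s3 : SS r p t q = 0 := by
    by_contra hc
    obtain ⟨z, hz, hp⟩ := SS_fan hc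
    have := FL hz hp h3.rot.rot
    grind
  have := relR h h1 h2 h3 h0 s1 s2 s3
  rw [e0, e1, e2, e3] at this
  cases e <;> simp at this

theorem crossing_aux {a1 b1 a2 b2 z z' : S} (h1 : Noncol a1 b1 a2)
    (hz : Btw a2 z b2) (hz1 : Btw a1 b1 z) (hz' : Btw a1 z' b1) (hz2 : Btw b2 a2 z') : False := by
  have k1 : Btw z' b1 z := (btw_trans_left hz' hz1).2
  have k1' : Btw a1 z' z := (btw_trans_left hz' hz1).1
  have k2 : Btw z a2 z' := (btw_trans_left (btw_symm hz) hz2).2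
  have k3 : Btw a1 a2 z := (btw_trans_right k1' (btw_symm k2)).1
  rcases btw_total hz1 k3 with h | h
  · exact h1.1 h
  · exact h1.2.1 (btw_symm h)

theorem crossing {a1 b1 a2 b2 : S} (h1 : Noncol a1 b1 a2) (h2 : Noncol a1 b1 b2)
    (e1 : eps a1 b1 a2 ≠ eps a1 b1 b2) (e2 : eps b2 a2 a1 ≠ eps b2 a2 b1) :
    ∃ O, Btw a1 O b1 ∧ Btw a2 O b2 := by
  obtain ⟨z, hz, hc⟩ := T1 e1
  obtain ⟨z', hz', hc'⟩ := T1 e2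
  rcases hc with hc | hc | hc
  · rcases hc' with hc' | hc' | hc'
    · exact (crossing_aux h1 hz hc hz' hc').elim
    · exact ⟨z', hz', hc'⟩
    · exact (crossing_aux h2 (btw_symm hz) hc hz' (btw_symm hc')).elim
  · exact ⟨z, btw_symm hc, hz⟩
  · rcases hc' with hc' | hc' | hc'
    · exact (crossing_aux h1.swap hz (btw_symm hc) (btw_symm hz') hc').elim
    · exact ⟨z', hz', hc'⟩
    · exact (crossing_aux h2.swap (btw_symm hz) (btw_symm hc) (btw_symm hz') (btw_symm hc')).elim

/-- paths in small punctured discs -/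
theorem punct (O : S) {ρ : ℝ} (hρ : 0 < ρ) : ∃ δ > 0, ∀ x y : S, x ≠ O → y ≠ O → dist O x < δ →
    dist O y < δ → ∃ γ : ℝ → S, Continuous γ ∧ γ 0 = x ∧ γ 1 = y ∧
      ∀ τ ∈ Icc (0:ℝ) 1, γ τ ≠ O ∧ dist O (γ τ) < ρ := by
  have h1 : ∀ᶠ z in nhds (hE S O), (hE S).symm z ∈ ball O ρ := by
    apply (hE S).symm.continuous.continuousAt
    simp only [Homeomorph.symm_apply_apply]
    exact ball_mem_nhds _ hρ
  obtain ⟨r, hr, h1⟩ := Metric.eventually_nhds_iff.1 h1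
  have h2 : ∀ᶠ x in nhds O, hE S x ∈ ball (hE S O) r :=
    (hE S).continuous.continuousAt (ball_mem_nhds _ hr)
  obtain ⟨δ, hδ, h2⟩ := Metric.eventually_nhds_iff.1 h2
  refine ⟨δ, hδ, fun x y hx hy dx dy => ?_⟩
  have zx := hE_sub_ne hx
  have zy := hE_sub_ne hy
  have bx := h2 (by rw [dist_comm]; exact dx)
  have bY := h2 (by rw [dist_comm]; exact dy)
  rw [mem_ball, dist_eq_norm] at bx bY
  set u := Complex.log (hE S x - hE S O) with hu
  set v := Complex.log (hE S y - hE S O) with hv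
  have eu : Complex.exp u = hE S x - hE S O := Complex.exp_log zx
  have ev : Complex.exp v = hE S y - hE S O := Complex.exp_log zy
  have hru : u.re < Real.log r := by
    rw [Real.lt_log_iff_exp_lt hr, ← Complex.norm_exp, eu]; exact bx
  have hrv : v.re < Real.log r := by
    rw [Real.lt_log_iff_exp_lt hr, ← Complex.norm_exp, ev]; exact bY
  refine ⟨fun τ => (hE S).symm (hE S O + Complex.exp ((1 - τ : ℝ) * u + (τ : ℝ) * v)), ?_, ?_, ?_, ?_⟩
  · exact (hE S).symm.continuous.comp (by fun_prop)
  · simp [eu]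
  · simp [ev]
  · intro τ hτ
    constructor
    · intro h
      have := congrArg (hE S) h
      rw [Homeomorph.apply_symm_apply] at this
      simp at this
    · rw [dist_comm]
      apply h1
      rw [dist_eq_norm, add_sub_cancel_left, Complex.norm_exp, ← Real.lt_log_iff_exp_lt hr]
      simp only [Complex.add_re, Complex.mul_re, Complex.ofReal_re, Complex.ofReal_im, zero_mul, sub_zero]
      rcases eq_or_lt_of_le hτ.1 with h | h
      · rw [← h]; simpa using hru
      · nlinarith [hτ.2]

end P3
end Bus
set_option linter.unusedSectionVars false
namespace Bus
section P4
variable {S : Type*} [MetricSpace S] [BSurf S]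

theorem leg_disj {O m x y : S} (h1 : Btw O m x) (h2 : Btw O m y) (h : Btw x O y) : m = O := by
  unfold Btw at *
  have := dist_triangle x m y
  rw [dist_comm x m] at this
  rw [dist_comm x O] at h
  have h3 : dist O m ≤ 0 := by linarith
  exact (dist_le_zero.1 h3).symm

theorem star_nc {O x k l : S} (hk : dist O x < dist O k) (hl : dist O x < dist O l)
    (h : Btw k O l) (nk : ¬ Btw O x k) (nl : ¬ Btw O x l) : Noncol k l x := by
  refine ⟨fun h1 => ?_, fun h1 => ?_, fun h1 => ?_⟩
  · have := (btw_trans_left h h1).2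
    unfold Btw at this; linarith [dist_nonneg (x := l) (y := x)]
  · rcases btw_total h1 (btw_symm h) with h2 | h2
    · exact nl (btw_symm h2)
    · exact nk (btw_trans_left h2 h1).2
  · have := (btw_trans_left (btw_symm h) (btw_symm h1)).2
    unfold Btw at this; linarith [dist_nonneg (x := k) (y := x)]

theorem star_push {O k l a m : S} (h : Btw k O a) (hm : Btw O m a) (hn : Noncol k l m) :
    eps k m l = eps k a l := T2 hn.swap23 (btw_trans_right h hm).1

theorem small_leg {O a : S} (h : O ≠ a) {δ : ℝ} (hδ : 0 < δ) :
    ∃ m, Btw O m a ∧ m ≠ O ∧ dist O m < δ := by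
  have hd : 0 < dist O a := dist_pos.2 h
  have hs : δ / (δ + dist O a) ∈ Icc (0:ℝ) 1 := ⟨by positivity, by rw [div_le_one (by positivity)]; linarith⟩
  have hdd := dist_geo_left O a hs
  refine ⟨geo O a _, btw_geo _ _ (δ / (δ + dist O a)), ?_, ?_⟩
  · intro e
    rw [e, dist_self] at hdd
    have : 0 < δ / (δ + dist O a) * dist O a := by positivity
    linarith
  · rw [hdd, div_mul_eq_mul_div, div_lt_iff₀ (by positivity)]; nlinarith

theorem star_step {O a j k l : S} {γ : ℝ → S} {t ρ : ℝ} (hγ : Continuous γ) (ht : 0 ≤ t) (ha : Btw O (γ 0) a)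
    (hj : Btw O (γ t) j) (hka : Btw k O a) (hkj : Btw k O j) (hkl : Btw k O l) 
    (hk : ρ ≤ dist O k) (hl : ρ ≤ dist O l)
    (hd : ∀ τ ∈ Icc 0 t, dist O (γ τ) < ρ)
    (nk : ∀ τ ∈ Icc 0 t, ¬ Btw O (γ τ) k) (nl : ∀ τ ∈ Icc 0 t, ¬ Btw O (γ τ) l) :
    eps k a l = eps k j l := by
  have hn : ∀ τ ∈ Icc 0 t, Noncol k l (γ τ) := fun τ hτ =>
    star_nc ((hd τ hτ).trans_le hk) ((hd τ hτ).trans_le hl) hkl (nk τ hτ) (nl τ hτ)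
  have h0 := hn 0 ⟨le_rfl, ht⟩
  have h1 := hn t ⟨ht, le_rfl⟩
  rw [← star_push hka ha h0, ← star_push hkj hj h1, eps_swap23 h0, eps_swap23 h1,
    lemC ht hγ.continuousOn hn]

theorem isClosed_leg (O x : S) : IsClosed {m | Btw O m x} := by
  unfold Btw; exact isClosed_eq (by fun_prop) (by fun_prop)

theorem star {O a b c d : S} (hab : Btw a O b) (hac : Btw a O c) (had : Btw a O d) (hbc : Btw b O c)
    (hbd : Btw b O d) (hcd : Btw c O d) (na : O ≠ a) (nb : O ≠ b) (nc : O ≠ c) (nd : O ≠ d) :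
    eps c a d = eps c b d ∨ eps b a d = eps b c d ∨ eps b a c = eps b d c := by
  obtain ⟨ρ, hρ, r1, r2, r3⟩ : ∃ ρ > 0, ρ ≤ dist O b ∧ ρ ≤ dist O c ∧ ρ ≤ dist O d :=
    ⟨min (dist O b) (min (dist O c) (dist O d)), lt_min (dist_pos.2 nb) (lt_min (dist_pos.2 nc) (dist_pos.2 nd)),
     min_le_left _ _, (min_le_right _ _).trans (min_le_left _ _), (min_le_right _ _).trans (min_le_right _ _)⟩
  obtain ⟨δ, hδ, hp⟩ := punct O hρ
  obtain ⟨x, hx, hxO, hxd⟩ := small_leg na hδ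
  obtain ⟨y, hy, hyO, hyd⟩ := small_leg nb hδ
  obtain ⟨γ, hγ, g0, g1, hg⟩ := hp x y hxO hyO hxd hyd
  have hcomp : IsCompact (Icc (0:ℝ) 1 ∩ γ ⁻¹' ({m | Btw O m b} ∪ {m | Btw O m c} ∪ {m | Btw O m d})) :=
    isCompact_Icc.inter_right ((((isClosed_leg O b).union (isClosed_leg O c)).union (isClosed_leg O d)).preimage hγ)
  obtain ⟨t, ⟨htI, htm⟩, htl⟩ := hcomp.exists_isLeast ⟨1, by simp, by simp [g1, hy]⟩
  have hlt : ∀ τ ∈ Icc 0 t, τ ≠ t → ¬ Btw O (γ τ) b ∧ ¬ Btw O (γ τ) c ∧ ¬ Btw O (γ τ) d := by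
    intro τ hτ hne
    have : τ < t := lt_of_le_of_ne hτ.2 hne
    by_contra hc
    have : t ≤ τ := htl ⟨⟨hτ.1, hτ.2.trans htI.2⟩, by
      simp only [mem_preimage, mem_union, mem_setOf_eq]; tauto⟩
    linarith
  have hd : ∀ τ ∈ Icc 0 t, dist O (γ τ) < ρ := fun τ hτ => (hg τ ⟨hτ.1, hτ.2.trans htI.2⟩).2
  have hO := (hg t htI).1
  have ha : Btw O (γ 0) a := by rw [g0]; exact hx
  simp only [mem_preimage, mem_union, mem_setOf_eq] at htm
  rcases htm with (htm | htm) | htm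
  · left
    refine star_step hγ htI.1 ha htm (btw_symm hac) (btw_symm hbc) hcd r2 r3 hd ?_ ?_
    · intro τ hτ
      by_cases h : τ = t
      · rw [h]; exact fun k => hO (leg_disj htm k hbc)
      · exact (hlt τ hτ h).2.1
    · intro τ hτ
      by_cases h : τ = t
      · rw [h]; exact fun k => hO (leg_disj htm k hbd)
      · exact (hlt τ hτ h).2.2
  · right; left
    refine star_step hγ htI.1 ha htm (btw_symm hab) hbc hbd r1 r3 hd ?_ ?_
    · intro τ hτ
      by_cases h : τ = t
      · rw [h]; exact fun k => hO (leg_disj k htm hbc)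
      · exact (hlt τ hτ h).1
    · intro τ hτ
      by_cases h : τ = t
      · rw [h]; exact fun k => hO (leg_disj htm k hcd)
      · exact (hlt τ hτ h).2.2
  · right; right
    refine star_step hγ htI.1 ha htm (btw_symm hab) hbd hbc r1 r2 hd ?_ ?_
    · intro τ hτ
      by_cases h : τ = t
      · rw [h]; exact fun k => hO (leg_disj k htm hbd)
      · exact (hlt τ hτ h).1
    · intro τ hτ
      by_cases h : τ = t
      · rw [h]; exact fun k => hO (leg_disj k htm hcd)
      · exact (hlt τ hτ h).2.1

theorem corner {O x x' y y' : S} (hx : Btw x O x') (hy : Btw y O y') (nx : O ≠ x) (ny : O ≠ y)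
    (h1 : Noncol x x' y) (h2 : Noncol y y' x) (he : eps x x' y = eps y y' x) : Btw x O y := by
  by_contra hc
  by_cases hn : Noncol x O y
  · have e1 := T2 hn hx
    have e2 := T2 hn.rot.rot.swap23.swap23.swap.rot.rot.swap23.rot.swap23 hy
    have a := eps_all hn
    grind
  · apply hn
    refine ⟨hc, fun k => ?_, fun k => ?_⟩
    · have := local_geo (btw_symm hy) k ny
      exact h2.swap.1 this
    · have := local_geo (btw_symm hx) (btw_symm k) nx
      exact h1.swap.1 this

theorem ACYC {a b c d : S} (e : Bool) (habc : Noncol a b c) (habd : Noncol a b d) (hacd : Noncol a c d)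
    (hbcd : Noncol b c d) (e1 : eps a b c = e) (e2 : eps a b d = !e) (e3 : eps a c d = e)
    (e4 : eps b c d = !e) : False := by
  have A1 := eps_all habc
  have A2 := eps_all habd
  have A3 := eps_all hacd
  have A4 := eps_all hbcd
  have hne : eps b c a ≠ eps b c d := by cases e <;> grind
  obtain ⟨w, hw, hcol⟩ := T1 hne
  rcases hcol with h | h | h
  · have := FL hw h habc.swap.swap23.swap23
    grind
  · have nOb : w ≠ b := by rintro rfl; exact habd.1 hw
    have nOc : w ≠ c := by rintro rfl; exact hacd.1 hw
    have nOa : w ≠ a := by rintro rfl; exact habc.2.2 h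
    have nOd : w ≠ d := by rintro rfl; exact hbcd.2.1 (btw_symm (btw_symm (by
      have := btw_symm h; exact (hbcd.swap23.1 this).elim)))
    have k1 := corner hw (btw_symm h) nOa nOb habd.swap23 habc.rot (by grind)
    have k2 := corner hw h nOa nOc hacd.swap23 habc.rot.rot.swap23 (by grind)
    have k3 := corner (btw_symm hw) (btw_symm h) nOd nOb habd.rot.rot hbcd (by grind)
    have k4 := corner (btw_symm hw) h nOd nOc hacd.rot.rot hbcd.swap (by grind)
    have := star k1 k2 hw (btw_symm h) (btw_symm k3) (btw_symm k4) nOa nOb nOc nOd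
    cases e <;> grind
  · have := FL hw (btw_symm h) habc.rot.rot
    grind

theorem VF {a p q r s : S} (e f : Bool) (h1 : Noncol a p q) (h2 : Noncol a q r) (h3 : Noncol a r p)
    (h4 : Noncol p q r) (h5 : Noncol a s p) (h6 : Noncol a s q) (h7 : Noncol a s r)
    (h8 : Noncol s p q) (h9 : Noncol s q r) (h10 : Noncol s r p)
    (e1 : eps a p q = e) (e2 : eps a q r = e) (e3 : eps a r p = e)
    (e5 : eps a s p = f) (e6 : eps a s q = f) (e7 : eps a s r = f) : False := by
  have A1 := eps_all h1
  have A2 := eps_all h2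
  have A3 := eps_all h3
  have A4 := eps_all h4
  have e4 : eps p q r = e := by
    by_contra hc
    exact ACYC e h1 h3.swap23 h2 h4 e1 (by grind) e2 (by grind)
  have hS := IL h4 h1 h2 h3 e4 e1 e2 e3
  rw [SS_cocycle (s := s) (fun k => h5.2.2 (btw_symm k)|>.elim) (fun k => h6.2.2 (btw_symm k)|>.elim) (fun k => h7.2.2 (btw_symm k)|>.elim)] at hS
  have key : ∀ {p q : S}, Noncol a s p → Noncol a s q → Noncol s p q → eps a s p = f → eps a s q = f →
      SS a s p q = 0 := by
    intro p q h1 h2 h3 e1 e2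
    by_contra hc
    obtain ⟨z, hz, hp⟩ := SS_fan hc
    have k1 := FL hz hp h1.rot
    have k2 := FL (btw_symm hz) hp h2.rot
    have := eps_all h3
    have := eps_all h1
    have := eps_all h2
    grind
  rw [key h5 h6 h8 e5 e6, key h6 h7 h9 e6 e7, key h7 h5 h10 e7 e5] at hS
  simp at hS

end P4
end Bus
set_option linter.unusedSectionVars false
namespace Bus
section P5
variable {S : Type*} [MetricSpace S] [BSurf S]

theorem chain_step {a f a2 b2 e : S} (x : Bool) (h1 : Noncol a f a2) (h2 : Noncol a f b2)
    (h3 : Noncol b2 a2 a) (h4 : Noncol b2 a2 f) (e1 : eps a f a2 = x) (e2 : eps a f b2 = !x)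
    (e3 : eps b2 a2 a = x) (e4 : eps b2 a2 f = x) (he : Btw a2 e b2) (hne : e ≠ a2)
    (hinv : Noncol a f e → eps a f e = !x) :
    ∃ z, Btw a2 z b2 ∧ z ≠ a2 ∧ Btw a f z ∧ dist a z + dist z a2 ≤ dist a e + dist e a2 := by
  have A1 := eps_all h1
  have A2 := eps_all h2
  have A3 := eps_all h3
  have A4 := eps_all h4
  by_cases hn : Noncol a f e
  · have B := eps_all hn
    have e5 := hinv hn
    have hcol : ∀ k, Noncol b2 a2 k → ¬ Btw a2 e k → Noncol a2 e k := by
      intro k hk hb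
      refine ⟨hb, fun h => ?_, fun h => ?_⟩
      · exact hk.swap.2.1 (btw_symm (btw_trans_left (btw_symm h) he).1)
      · exact hk.1 (local_geo (btw_symm he) (btw_symm h) hne)
    have n1 : Noncol a2 e a := hcol a h3 (fun h => by
      have := T2 hn.swap23 (btw_symm h)
      cases x <;> grind)
    have n2 : Noncol a2 e f := hcol f h4 (fun h => by
      have := T2 hn.rot (btw_symm h)
      cases x <;> grind)
    have p1 := T2 n1 he
    have p2 := T2 n2 he
    have C1 := eps_all n1
    have C2 := eps_all n2
    have hS := IL (t := f) (p := e) (q := a2) (r := a) (e := x) n1.swap n2.rot.rot.swap23 h1.rot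
      hn.swap (by grind) (by grind) (by grind) (by grind)
    rw [SS_rot, SS_rot] at hS
    obtain ⟨z, hz, hf⟩ := SS_fan hS
    refine ⟨z, (btw_trans_left (btw_symm hz) he).1, ?_, hf, ?_⟩
    · rintro rfl; exact h1.1 hf
    · have := dist_triangle a e z
      unfold Btw at hz; linarith
  · have hS := IL (t := f) (p := b2) (q := a2) (r := a) (e := x) h3 h4.rot.rot h1.rot
      h2.swap (by grind) (by grind) (by grind) (by grind)
    rw [SS_rot, SS_rot] at hS
    obtain ⟨z0, hz0, hf0⟩ := SS_fan hS
    by_cases hb : Btw a f e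
    · exact ⟨e, he, hne, hb, le_rfl⟩
    · exfalso
      apply hn
      refine ⟨hb, fun h => ?_, fun h => ?_⟩
      · have k1 : Btw e f z0 := (btw_trans_left (btw_symm h) hf0).2
        have k2 := btw_sub he (btw_symm hz0) k1
        exact h4.2.1 k2
      · have := FL he (btw_symm h) h1.rot
        cases x <;> grind

theorem inv_step {a f e g : S} {x : Bool} (hb : Btw a f e) (h1 : Noncol a f g) (e1 : eps a f g = x)
    (h2 : Noncol f g e) : eps f g e = !x := by
  have := T3 hb h1 h2.swap23
  have := eps_all h2
  cases x <;> grind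

theorem vf_bool : ∀ (pq qr rp sp sq sr cp cq cr cs : Bool),
    ¬(pq=qr∧qr=rp∧sp=sq∧sq=sr) → ¬(sq=qr ∧ qr=(!sr) ∧ (!sp)=pq ∧ pq=!rp) →
    ¬(sr=rp ∧ rp=(!sp) ∧ (!sq)=qr ∧ qr=!pq) → ¬(sp=pq∧pq=(!sq)∧(!sr)=rp∧rp=!qr) →
    ¬((pq ^^ cp ^^ cq) = (qr ^^ cq ^^ cr) ∧ (qr ^^ cq ^^ cr) = (rp ^^ cr ^^ cp) ∧
      (sp ^^ cs ^^ cp) = (sq ^^ cs ^^ cq) ∧ (sq ^^ cs ^^ cq) = (sr ^^ cs ^^ cr)) := by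
  intro pq qr rp sp sq sr cp cq cr cs
  cases pq <;> cases qr <;> cases rp <;> cases sp <;> cases sq <;> cases sr <;> simp <;> 
    cases cp <;> cases cq <;> cases cr <;> cases cs <;> simp

theorem sinkEx {ι : Type*} [DecidableEq ι] (R : ι → ι → Prop) (W : Finset ι) (hW : W.Nonempty)
    (htot : ∀ y ∈ W, ∀ z ∈ W, y ≠ z → R y z ∨ R z y)
    (htr : ∀ y ∈ W, ∀ z ∈ W, ∀ w ∈ W, y ≠ z → z ≠ w → y ≠ w → R y z → R z w → R y w) :
    ∃ m ∈ W, ∀ y ∈ W, y ≠ m → R y m := by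
  induction W using Finset.induction_on with
  | empty => exact absurd hW (by simp)
  | insert a W ha ih =>
    by_cases hne : W.Nonempty
    · obtain ⟨m, hm, h⟩ := ih hne (fun y hy z hz => htot y (by simp [hy]) z (by simp [hz]))
        (fun y hy z hz w hw => htr y (by simp [hy]) z (by simp [hz]) w (by simp [hw]))
      have ham : a ≠ m := by rintro rfl; exact ha hm
      rcases htot a (by simp) m (by simp [hm]) ham with h1 | h1
      · refine ⟨m, by simp [hm], fun y hy hym => ?_⟩
        rcases Finset.mem_insert.1 hy with rfl | hy
        · exact h1
        · exact h y hy hym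
      · refine ⟨a, by simp, fun y hy hya => ?_⟩
        have hy : y ∈ W := (Finset.mem_insert.1 hy).resolve_left hya
        by_cases hym : y = m
        · rw [hym]; exact h1
        · exact htr y (by simp [hy]) m (by simp [hm]) a (by simp) hym ham.symm hya (h y hy hym) h1
    · rw [Finset.not_nonempty_iff_eq_empty] at hne
      subst hne
      exact ⟨a, by simp, fun y hy hya => absurd (by simpa using hy) hya⟩

theorem source_sink {ι : Type*} [DecidableEq ι] (K : ι → ι → Bool) (W : Finset ι) (x : Bool)
    (hanti : ∀ y ∈ W, ∀ z ∈ W, y ≠ z → K z y = !K y z)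
    (hvf : ∀ y ∈ W, ∀ z ∈ W, ∀ w ∈ W, ∀ u ∈ W, y ≠ z → z ≠ w → y ≠ w → u ≠ y → u ≠ z → u ≠ w →
      ¬(K y z = K z w ∧ K z w = K w y ∧ K u y = K u z ∧ K u z = K u w))
    (h : ∃ y ∈ W, ∀ z ∈ W, z ≠ y → K y z = x) : ∃ y ∈ W, ∀ z ∈ W, z ≠ y → K y z = !x := by
  obtain ⟨u, hu, hs⟩ := h
  obtain ⟨m, hm, hh⟩ := sinkEx (fun y z => K y z = x) W ⟨u, hu⟩
    (fun y hy z hz hyz => by have := hanti y hy z hz hyz; cases x <;> grind)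
    (by
      intro y hy z hz w hw hyz hzw hyw k1 k2
      by_contra hc
      have k3 := hanti y hy w hw hyw
      by_cases h1 : u = y
      · subst h1; exact hc (hs w hw hyw.symm)
      by_cases h2 : u = z
      · subst h2
        have := hanti y hy u hz hyz; have := hs y hy hyz; cases x <;> grind
      by_cases h3 : u = w
      · subst h3
        have := hanti z hz u hw hzw; have := hs z hz hzw; cases x <;> grind
      exact hvf y hy z hz w hw u hu hyz hzw hyw h1 h2 h3 ⟨by rw [k1, k2], by cases x <;> grind,
        by rw [hs y hy (Ne.symm h1), hs z hz (Ne.symm h2)], by rw [hs w hw (Ne.symm h3), hs z hz (Ne.symm h2)]⟩)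
  refine ⟨m, hm, fun z hz hzm => ?_⟩
  have := hh z hz hzm
  have := hanti z hz m hm hzm
  grind

section comb
variable {ι : Type*} [Fintype ι] [DecidableEq ι]

def Gen (q : ι → S) : Prop := ∀ i j k, i ≠ j → j ≠ k → i ≠ k → Noncol (q i) (q j) (q k)

def Ed (q : ι → S) (c : ι → Bool) (i j : ι) : Prop :=
  i ≠ j ∧ ∀ k, k ≠ i → k ≠ j → eps (q i) (q j) (q k) = c k

variable {q : ι → S} {c : ι → Bool}


theorem succ_pred (hq : Gen q) (v : ι) (x : Bool)
    (h : ∃ y, y ≠ v ∧ ((c y = x ∧ Ed q c v y) ∨ (c y = (!x) ∧ Ed q c y v))) :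
    ∃ y, y ≠ v ∧ ((c y = (!x) ∧ Ed q c v y) ∨ (c y = x ∧ Ed q c y v)) := by
  have tr : ∀ x y, y ≠ v → ((∀ z ∈ Finset.univ.erase v, z ≠ y → (eps (q v) (q y) (q z) ^^ c y ^^ c z) = x) ↔
      ((c y = x ∧ Ed q c v y) ∨ (c y = (!x) ∧ Ed q c y v))) := by
    intro x y hy
    unfold Ed
    have hh : c y = x ∨ c y = !x := by cases x <;> cases c y <;> simp
    constructor
    · intro h
      rcases hh with hh | hh
      · left; refine ⟨hh, hy.symm, fun k k1 k2 => ?_⟩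
        have := h k (by simp [k1]) k2
        rw [hh] at this
        revert this; cases x <;> cases c k <;> simp
      · right; refine ⟨hh, hy, fun k k1 k2 => ?_⟩
        have := h k (by simp [k2]) k1
        rw [eps_swap (hq v y k hy.symm k1.symm k2.symm)]
        rw [hh] at this
        revert this; cases x <;> cases c k <;> simp
    · rintro (⟨h1, -, h2⟩ | ⟨h1, -, h2⟩) z hz hzy
      · have hz : z ≠ v := by simpa using hz
        rw [h2 z hz hzy, h1]; cases x <;> cases c z <;> rfl
      · have hz : z ≠ v := by simpa using hz
        have := h2 z hzy hz
        rw [eps_swap (hq y v z hy hz.symm hzy.symm), h1, this]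
        cases x <;> cases c z <;> rfl
  obtain ⟨y, hy, h⟩ := h
  obtain ⟨m, hm, hh⟩ := source_sink (fun y z => (eps (q v) (q y) (q z) ^^ c y ^^ c z)) (Finset.univ.erase v) x
    (by
      intro y hy z hz hyz
      have hy : y ≠ v := by simpa using hy
      have hz : z ≠ v := by simpa using hz
      rw [eps_swap23 (hq v y z hy.symm hyz hz.symm)]
      cases eps (q v) (q y) (q z) <;> cases c y <;> cases c z <;> rfl)
    (by
      intro p hp q' hq' r hr s hs hpq hqr hpr hsp hsq hsr
      have hp : p ≠ v := by simpa using hp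
      have hq' : q' ≠ v := by simpa using hq'
      have hr : r ≠ v := by simpa using hr
      have hs : s ≠ v := by simpa using hs
      have vf : ∀ p q' r s : ι, p ≠ v → q' ≠ v → r ≠ v → s ≠ v → p ≠ q' → q' ≠ r → p ≠ r → s ≠ p → s ≠ q' → s ≠ r →
          ¬ (eps (q v) (q p) (q q') = eps (q v) (q q') (q r) ∧ eps (q v) (q q') (q r) = eps (q v) (q r) (q p) ∧
            eps (q v) (q s) (q p) = eps (q v) (q s) (q q') ∧ eps (q v) (q s) (q q') = eps (q v) (q s) (q r)) := by
        rintro p q' r s hp hq' hr hs hpq hqr hpr hsp hsq hsr ⟨h1, h2, h3, h4⟩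
        exact VF _ _ (hq v p q' hp.symm hpq hq'.symm) (hq v q' r hq'.symm hqr hr.symm) (hq v r p hr.symm hpr.symm hp.symm)
          (hq p q' r hpq hqr hpr) (hq v s p hs.symm hsp hp.symm) (hq v s q' hs.symm hsq hq'.symm) (hq v s r hs.symm hsr hr.symm)
          (hq s p q' hsp hpq hsq) (hq s q' r hsq hqr hsr) (hq s r p hsr hpr.symm hsp) (h1.trans h2) h2 rfl (h3.trans h4) h4 rfl
      have sw : ∀ y z, y ≠ v → z ≠ v → y ≠ z → eps (q v) (q z) (q y) = !eps (q v) (q y) (q z) :=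
        fun y z h1 h2 h3 => eps_swap23 (hq v y z h1.symm h3 h2.symm)
      have v1 := vf p q' r s hp hq' hr hs hpq hqr hpr hsp hsq hsr
      have v2 := vf s q' r p hs hq' hr hp hsq hqr hsr hsp.symm hpq hpr
      have v3 := vf s r p q' hs hr hp hq' hsr hpr.symm hsp hsq.symm hqr hpq.symm
      have v4 := vf s p q' r hs hp hq' hr hsp hpq hsq hsr.symm hpr.symm hqr.symm
      rw [sw s r hs hr hsr, sw s p hs hp hsp, sw r p hr hp hpr.symm] at v2
      rw [sw s p hs hp hsp, sw s q' hs hq' hsq, sw p q' hp hq' hpq] at v3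
      rw [sw s q' hs hq' hsq, sw s r hs hr hsr, sw q' r hq' hr hqr] at v4
      exact vf_bool _ _ _ _ _ _ _ _ _ _ v1 v2 v3 v4)
    ⟨y, by simp [hy], (tr x y hy).2 h⟩
  have hm' : m ≠ v := by simpa using hm
  refine ⟨m, hm', ?_⟩
  have := (tr (!x) m hm').1 hh
  simpa using this

end comb
end P5
end Bus
set_option linter.unusedSectionVars false
namespace Bus
section P6
variable {S : Type*} [MetricSpace S] [BSurf S]
variable {ι : Type*} [Fintype ι] [DecidableEq ι] {q : ι → S} {c : ι → Bool}

def AE (q : ι → S) (c : ι → Bool) (x : Bool) (i j : ι) : Prop := Ed q c i j ∧ c i = x ∧ c j = x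

theorem U1 (hq : Gen q) (x : Bool) {a b a' b' : ι} (h : Ed q c a b) (h' : Ed q c a' b')
    (ca : c a = x) (ca' : c a' = x) (cb : c b = !x) (cb' : c b' = !x) : a = a' ∧ b = b' := by
  have hab' : a ≠ b' := by rintro rfl; cases x <;> grind
  have hab'' : a' ≠ b := by rintro rfl; cases x <;> grind
  obtain ⟨n1, h⟩ := h
  obtain ⟨n2, h'⟩ := h'
  by_cases h1 : a = a'
  · subst h1
    refine ⟨rfl, ?_⟩
    by_contra h2
    have e1 := h b' (Ne.symm hab') (Ne.symm h2)
    have e2 := h' b (Ne.symm n1) h2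
    have := eps_all (hq a b b' n1 h2 hab')
    cases x <;> grind
  by_cases h2 : b = b'
  · subst h2
    exfalso
    have e1 := h a' (Ne.symm h1) n2
    have e2 := h' a h1 n1
    have := eps_all (hq a b a' n1 (Ne.symm n2) h1)
    cases x <;> grind
  exfalso
  have e1 := h a' (Ne.symm h1) hab''
  have e2 := h b' (Ne.symm hab') (Ne.symm h2)
  have e3 := h' a h1 hab'
  have e4 := h' b (Ne.symm hab'') h2
  exact ACYC x (hq a b a' n1 (Ne.symm hab'') h1) (hq a b b' n1 h2 hab') (hq a a' b' h1 n2 hab')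
    (hq b a' b' (Ne.symm hab'') n2 h2) (e1.trans ca') (e2.trans cb')
    (by rw [← ca, ← e3, eps_rot]; ) (by rw [← cb, ← e4, eps_rot])

theorem U3 (hq : Gen q) (x : Bool) {a g g' : ι} (h : Ed q c a g) (h' : Ed q c a g')
    (cg : c g = x) (cg' : c g' = x) : g = g' := by
  by_contra hne
  have e1 := h.2 g' (Ne.symm h'.1) (Ne.symm hne)
  have e2 := h'.2 g (Ne.symm h.1) hne
  have := eps_all (hq a g g' h.1 hne h'.1)
  cases x <;> grind

theorem U4 (x : Bool) {a a' b : ι} (h : Ed q c a a') (h' : Ed q c b a)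
    (ca' : c a' = x) (cb : c b = !x) : False := by
  have hne : a' ≠ b := by rintro rfl; cases x <;> grind
  have e1 := h.2 b h'.1 (Ne.symm hne)
  have e2 := h'.2 a' hne (Ne.symm h.1)
  have := eps_rot (q b) (q a) (q a')
  cases x <;> grind

theorem muEx (hq : Gen q) (x : Bool) (hb : ∃ b, c b = !x) : ∃ μ : ι → ℕ, ∀ y f, AE q c x y f → μ f < μ y := by
  obtain ⟨b, cb⟩ := hb
  refine ⟨fun y => (Finset.univ.filter (fun z => c z = x ∧ z ≠ y ∧ eps (q b) (q y) (q z) = !x)).card, ?_⟩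
  rintro y f ⟨h, cy, cf⟩
  have nby : b ≠ y := by rintro rfl; cases x <;> grind
  have nbf : b ≠ f := by rintro rfl; cases x <;> grind
  have e1 : eps (q b) (q y) (q f) = !x := by rw [eps_rot, h.2 b nby nbf, cb]
  have A1 := eps_all (hq b y f nby h.1 nbf)
  apply Finset.card_lt_card
  rw [Finset.ssubset_iff]
  refine ⟨f, by simp, ?_⟩
  intro z hz
  rcases Finset.mem_insert.1 hz with rfl | hz
  · simp [cf, e1, Ne.symm h.1]
  · simp only [Finset.mem_filter, Finset.mem_univ, true_and] at hz ⊢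
    obtain ⟨cz, nzf, e2⟩ := hz
    have nbz : b ≠ z := by rintro rfl; cases x <;> grind
    have nzy : z ≠ y := by rintro rfl; cases x <;> grind
    refine ⟨cz, nzy, ?_⟩
    by_contra e3
    have e4 := h.2 z nzy nzf
    exact ACYC (!x) (hq b y f nby h.1 nbf) (hq b y z nby nzy.symm nbz) (hq b f z nbf nzf.symm nbz)
      (hq y f z h.1 nzf.symm nzy.symm) e1 (by cases x <;> simpa using e3) e2 (by simp [e4, cz])

open Classical in
noncomputable def gg (q : ι → S) (c : ι → Bool) (x : Bool) (i : ι) : ℝ :=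
  ∑ j, if AE q c x i j then dist (q i) (q j) else 0

open Classical in
noncomputable def Yr (q : ι → S) (c : ι → Bool) (x : Bool) (i : ι) : Finset ι :=
  Finset.univ.filter (fun j => Relation.ReflTransGen (AE q c x) i j)

theorem gg_zero {x : Bool} {i : ι} (h : ∀ j, ¬ AE q c x i j) : gg q c x i = 0 := by
  unfold gg; simp [h]

theorem gg_one (hq : Gen q) {x : Bool} {i f : ι} (h : AE q c x i f) : gg q c x i = dist (q i) (q f) := by
  unfold gg
  rw [Finset.sum_eq_single f]
  · simp [h]
  · intro j _ hj
    rw [if_neg]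
    intro h'
    exact hj (U3 hq x h'.1 h.1 h'.2.2 h.2.2)
  · simp

theorem Yr_none {x : Bool} {i : ι} (h : ∀ j, ¬ AE q c x i j) : Yr q c x i = {i} := by
  ext j
  simp only [Yr, Finset.mem_filter, Finset.mem_univ, true_and, Finset.mem_singleton]
  constructor
  · intro hj
    rcases hj.cases_head with rfl | ⟨k, hk, -⟩
    · rfl
    · exact absurd hk (h k)
  · rintro rfl; exact Relation.ReflTransGen.refl

theorem Yr_step (hq : Gen q) {x : Bool} {i f : ι} (h : AE q c x i f) :
    Yr q c x i = insert i (Yr q c x f) := by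
  ext j
  simp only [Yr, Finset.mem_filter, Finset.mem_univ, true_and, Finset.mem_insert]
  constructor
  · intro hj
    rcases hj.cases_head with rfl | ⟨k, hk, h2⟩
    · left; rfl
    · right; rwa [U3 hq x h.1 hk.1 h.2.2 hk.2.2]
  · rintro (rfl | h2)
    · exact Relation.ReflTransGen.refl
    · exact Relation.ReflTransGen.head h h2

theorem mu_reach {x : Bool} {μ : ι → ℕ} (hμ : ∀ y f, AE q c x y f → μ f < μ y) {i j : ι}
    (h : Relation.ReflTransGen (AE q c x) i j) : μ j ≤ μ i := by
  induction h with
  | refl => exact le_rfl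
  | tail _ h2 ih => exact (hμ _ _ h2).le.trans ih

theorem chain (hq : Gen q) (x : Bool) {a2 b2 : ι} (h2 : Ed q c b2 a2) (ca2 : c a2 = x) (cb2 : c b2 = !x)
    {μ : ι → ℕ} (hμ : ∀ y f, AE q c x y f → μ f < μ y) : ∀ (n : ℕ) (a : ι), μ a ≤ n → ∀ e : S,
    Btw (q a2) e (q b2) → e ≠ q a2 →
    (∀ g, AE q c x a g → Noncol (q a) (q g) e → eps (q a) (q g) e = !x) →
    ∑ y ∈ Yr q c x a, gg q c x y ≤ dist (q a) e + dist e (q a2) := by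
  have ha2 : ∀ j, ¬ AE q c x a2 j := fun j h => U4 x h.1 h2 h.2.2 cb2
  intro n
  induction n with
  | zero =>
    intro a ha e _ _ _
    have : ∀ j, ¬ AE q c x a j := fun j h => by have := hμ _ _ h; omega
    rw [Yr_none this, Finset.sum_singleton, gg_zero this]
    positivity
  | succ n ih =>
    intro a ha e he hne hinv
    by_cases hex : ∃ f, AE q c x a f
    swap
    · push Not at hex
      rw [Yr_none hex, Finset.sum_singleton, gg_zero hex]
      positivity
    obtain ⟨f, hf⟩ := hex
    have hμf := hμ _ _ hf
    have hnot : a ∉ Yr q c x f := by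
      intro h
      have := mu_reach hμ (by simpa [Yr] using h)
      omega
    rw [Yr_step hq hf, Finset.sum_insert hnot, gg_one hq hf]
    have naa2 : a ≠ a2 := by rintro rfl; exact ha2 _ hf
    by_cases hfa : f = a2
    · subst hfa
      rw [Yr_none ha2, Finset.sum_singleton, gg_zero ha2, add_zero]
      exact dist_triangle _ _ _
    have nab : a ≠ b2 := by rintro rfl; have := hf.2.1; cases x <;> grind
    have nfb : f ≠ b2 := by rintro rfl; have := hf.2.2; cases x <;> grind
    obtain ⟨z, hz, hza, hfz, hd⟩ := chain_step x (hq a f a2 hf.1.1 hfa naa2) (hq a f b2 hf.1.1 nfb nab)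
      (hq b2 a2 a h2.1 naa2.symm nab.symm) (hq b2 a2 f h2.1 (Ne.symm hfa) nfb.symm)
      ((hf.1.2 a2 naa2.symm (Ne.symm hfa)).trans ca2) ((hf.1.2 b2 nab.symm nfb.symm).trans cb2)
      ((h2.2 a nab naa2).trans hf.2.1) ((h2.2 f nfb hfa).trans hf.2.2) he hne (hinv f hf)
    have := ih f (by omega) z hz hza (by
      intro g hg hn
      have nga : g ≠ a := by
        rintro rfl
        have := hμ _ _ hg
        omega
      exact inv_step hfz (hq a f g hf.1.1 hg.1.1 nga.symm) ((hf.1.2 g nga (Ne.symm hg.1.1)).trans hg.2.2) hn)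
    unfold Btw at hfz
    linarith

theorem reach_all (hq : Gen q) (x : Bool) {a1 b1 : ι} (h1 : Ed q c a1 b1) (ca1 : c a1 = x) (cb1 : c b1 = !x)
    {μ : ι → ℕ} (hμ : ∀ y f, AE q c x y f → μ f < μ y) {M : ℕ} (hM : ∀ y, μ y ≤ M) :
    ∀ (n : ℕ) (y : ι), M - μ y ≤ n → (∃ f, AE q c x y f) → Relation.ReflTransGen (AE q c x) a1 y := by
  intro n
  induction n with
  | zero =>
    rintro y hy ⟨f, hf⟩
    obtain ⟨z, hz, ⟨h3, h4⟩ | ⟨h3, h4⟩⟩ := succ_pred hq y x ⟨f, Ne.symm hf.1.1, Or.inl ⟨hf.2.2, hf.1⟩⟩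
    · rw [(U1 hq x h1 h4 ca1 hf.2.1 cb1 h3).1]
    · have := hμ z y ⟨h4, h3, hf.2.1⟩
      have := hM z
      omega
  | succ n ih =>
    rintro y hy ⟨f, hf⟩
    obtain ⟨z, hz, ⟨h3, h4⟩ | ⟨h3, h4⟩⟩ := succ_pred hq y x ⟨f, Ne.symm hf.1.1, Or.inl ⟨hf.2.2, hf.1⟩⟩
    · rw [(U1 hq x h1 h4 ca1 hf.2.1 cb1 h3).1]
    · have hzy : AE q c x z y := ⟨h4, h3, hf.2.1⟩
      have := hμ z y hzy
      have := hM z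
      exact (ih z (by omega) ⟨y, hzy⟩).tail hzy

theorem chainBound (hq : Gen q) (x : Bool) {a1 b1 a2 b2 : ι} {O : S} (h1 : Ed q c a1 b1) (h2 : Ed q c b2 a2)
    (ca1 : c a1 = x) (cb1 : c b1 = !x) (ca2 : c a2 = x) (cb2 : c b2 = !x)
    (hO1 : Btw (q a1) O (q b1)) (hO2 : Btw (q a2) O (q b2)) :
    ∑ i, gg q c x i ≤ dist (q a1) O + dist O (q a2) := by
  obtain ⟨μ, hμ⟩ := muEx hq x ⟨b1, cb1⟩
  have ha2 : ∀ j, ¬ AE q c x a2 j := fun j h => U4 x h.1 h2 h.2.2 cb2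
  by_cases hX : ∃ y f, AE q c x y f
  swap
  · push Not at hX
    rw [Finset.sum_eq_zero (fun i _ => gg_zero (hX i))]
    positivity
  have hr : ∀ y, (∃ f, AE q c x y f) → Relation.ReflTransGen (AE q c x) a1 y := fun y hy =>
    reach_all hq x h1 ca1 cb1 hμ (M := ∑ i, μ i)
      (fun y => Finset.single_le_sum (f := μ) (fun _ _ => Nat.zero_le _) (Finset.mem_univ y)) _ y le_rfl hy
  have hsum : ∑ i, gg q c x i = ∑ i ∈ Yr q c x a1, gg q c x i := by
    symm
    apply Finset.sum_subset (Finset.subset_univ _)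
    intro y _ hy
    apply gg_zero
    intro j hj
    apply hy
    simp only [Yr, Finset.mem_filter, Finset.mem_univ, true_and]
    exact hr y ⟨j, hj⟩
  have hne : a1 ≠ a2 := by
    rintro rfl
    obtain ⟨y, f, hf⟩ := hX
    rcases (hr y ⟨f, hf⟩).cases_head with rfl | ⟨k, hk, -⟩
    · exact ha2 _ hf
    · exact ha2 _ hk
  have nb : b1 ≠ a2 := by rintro rfl; cases x <;> grind
  rw [hsum]
  refine chain hq x h2 ca2 cb2 hμ _ a1 le_rfl O hO2 ?_ ?_
  · rintro rfl
    exact (hq a1 a2 b1 hne nb.symm h1.1).1 hO1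
  · intro g hg hn
    have ngb : g ≠ b1 := by rintro rfl; have := hg.2.2; cases x <;> grind
    have e1 := T2 hn.swap23 hO1
    have e2 := h1.2 g (Ne.symm hg.1.1) ngb
    have e3 := eps_all hn
    have := hg.2.2
    cases x <;> grind

theorem edgeEx (hq : Gen q) (x : Bool) (hb : ∃ b, c b = !x) (hX : ∃ y f, AE q c x y f) :
    ∃ a1 b1 a2 b2, Ed q c a1 b1 ∧ Ed q c b2 a2 ∧ c a1 = x ∧ c b1 = (!x) ∧ c a2 = x ∧ c b2 = !x := by
  classical
  obtain ⟨μ, hμ⟩ := muEx hq x hb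
  have hne : (Finset.univ.filter (fun y => ∃ f, AE q c x y f)).Nonempty := by
    obtain ⟨y, f, h⟩ := hX
    exact ⟨y, by simpa using ⟨f, h⟩⟩
  obtain ⟨y, hy, hmax⟩ := Finset.exists_max_image _ μ hne
  obtain ⟨w, hw, hmin⟩ := Finset.exists_min_image _ μ hne
  simp only [Finset.mem_filter, Finset.mem_univ, true_and] at hy hmax hw hmin
  obtain ⟨f, hf⟩ := hy
  obtain ⟨v, hv⟩ := hw
  obtain ⟨z, hz, ⟨h3, h4⟩ | ⟨h3, h4⟩⟩ := succ_pred hq y x ⟨f, Ne.symm hf.1.1, Or.inl ⟨hf.2.2, hf.1⟩⟩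
  swap
  · have hzy : AE q c x z y := ⟨h4, h3, hf.2.1⟩
    have := hμ z y hzy
    have := hmax z ⟨_, hzy⟩
    omega
  obtain ⟨u, hu, ⟨h5, h6⟩ | ⟨h5, h6⟩⟩ := succ_pred hq v (!x) ⟨w, hv.1.1, Or.inr ⟨by simp [hv.2.1], hv.1⟩⟩
  · have hvu : AE q c x v u := ⟨h6, hv.2.2, by simpa using h5⟩
    have := hμ w v hv
    have := hmin v ⟨_, hvu⟩
    omega
  exact ⟨y, z, v, u, h4, h6, hf.2.1, h3, hv.2.2, h5⟩

theorem OEx (hq : Gen q) (x : Bool) {a1 b1 a2 b2 : ι} (h1 : Ed q c a1 b1) (h2 : Ed q c b2 a2)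
    (ca1 : c a1 = x) (cb1 : c b1 = !x) (ca2 : c a2 = x) (cb2 : c b2 = !x) :
    ∃ O, Btw (q a1) O (q b1) ∧ Btw (q a2) O (q b2) := by
  by_cases ha : a1 = a2
  · subst ha; exact ⟨q a1, btw_left _ _, btw_left _ _⟩
  by_cases hb : b1 = b2
  · subst hb; exact ⟨q b1, btw_right _ _, btw_right _ _⟩
  have n1 : a1 ≠ b2 := by rintro rfl; cases x <;> grind
  have n2 : b1 ≠ a2 := by rintro rfl; cases x <;> grind
  have e1 := h1.2 a2 (Ne.symm ha) n2.symm
  have e2 := h1.2 b2 n1.symm (Ne.symm hb)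
  have e3 := h2.2 a1 n1 ha
  have e4 := h2.2 b1 hb n2
  exact crossing (hq a1 b1 a2 h1.1 n2 ha) (hq a1 b1 b2 h1.1 hb n1) (by cases x <;> grind) (by cases x <;> grind)

open Classical in
noncomputable def ww (q : ι → S) (c : ι → Bool) : ℝ :=
  ∑ i, ∑ j, if Ed q c i j then (if c i ≠ c j then dist (q i) (q j) else - dist (q i) (q j)) else 0

theorem ww_nonneg (hq : Gen q) (h0 : ∃ b, c b = false) (h1 : ∃ b, c b = true) : 0 ≤ ww q c := by
  classical
  have hsplit : ww q c = (∑ i, ∑ j, if Ed q c i j ∧ c i ≠ c j then dist (q i) (q j) else 0) -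
      (∑ i, gg q c true i) - (∑ i, gg q c false i) := by
    unfold ww gg
    rw [← Finset.sum_sub_distrib, ← Finset.sum_sub_distrib]
    refine Finset.sum_congr rfl (fun i _ => ?_)
    rw [← Finset.sum_sub_distrib, ← Finset.sum_sub_distrib]
    refine Finset.sum_congr rfl (fun j _ => ?_)
    unfold AE
    by_cases he : Ed q c i j
    · cases hi : c i <;> cases hj : c j <;> simp [he]
    · simp [he]
  have hP0 : ∀ i j, 0 ≤ (if Ed q c i j ∧ c i ≠ c j then dist (q i) (q j) else 0) := by
    intro i j; split_ifs <;> positivity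
  have key : ∀ a1 b1 a2 b2, Ed q c a1 b1 → Ed q c b2 a2 → c a1 = true → c b1 = false → c a2 = true →
      c b2 = false → 0 ≤ ww q c := by
    intro a1 b1 a2 b2 k1 k2 ca1 cb1 ca2 cb2
    obtain ⟨O, hO1, hO2⟩ := OEx hq true k1 k2 ca1 cb1 ca2 cb2
    have d1 := chainBound hq true k1 k2 ca1 cb1 ca2 cb2 hO1 hO2
    have d2 := chainBound hq false k2 k1 cb2 ca2 cb1 ca1 (btw_symm hO2) (btw_symm hO1)
    have hne : a1 ≠ b2 := by rintro rfl; grind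
    have hP : dist (q a1) (q b1) + dist (q b2) (q a2) ≤
        ∑ i, ∑ j, if Ed q c i j ∧ c i ≠ c j then dist (q i) (q j) else 0 := by
      calc _ ≤ ∑ i ∈ ({a1, b2} : Finset ι), ∑ j, (if Ed q c i j ∧ c i ≠ c j then dist (q i) (q j) else 0) := by
            rw [Finset.sum_pair hne]
            refine add_le_add ?_ ?_
            · refine le_trans ?_ (Finset.single_le_sum (fun j _ => hP0 a1 j) (Finset.mem_univ b1))
              simp [k1, ca1, cb1]
            · refine le_trans ?_ (Finset.single_le_sum (fun j _ => hP0 b2 j) (Finset.mem_univ a2))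
              simp [k2, ca2, cb2]
        _ ≤ _ := Finset.sum_le_sum_of_subset_of_nonneg (Finset.subset_univ _)
            (fun i _ _ => Finset.sum_nonneg (fun j _ => hP0 i j))
    unfold Btw at hO1 hO2
    have := dist_comm (q a2) (q b2)
    have := dist_comm (q b2) O
    have := dist_comm (q a2) O
    rw [hsplit]
    linarith
  by_cases hA : ∃ y f, AE q c true y f
  · obtain ⟨a1, b1, a2, b2, k1, k2, k3, k4, k5, k6⟩ := edgeEx hq true h0 hA
    exact key a1 b1 a2 b2 k1 k2 k3 k4 k5 k6
  by_cases hB : ∃ y f, AE q c false y f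
  · obtain ⟨a1, b1, a2, b2, k1, k2, k3, k4, k5, k6⟩ := edgeEx hq false h1 hB
    exact key b2 a2 b1 a1 k2 k1 k6 k5 k4 k3
  push Not at hA hB
  rw [hsplit, Finset.sum_eq_zero (fun i _ => gg_zero (hA i)), Finset.sum_eq_zero (fun i _ => gg_zero (hB i))]
  simp only [sub_zero]
  exact Finset.sum_nonneg (fun i _ => Finset.sum_nonneg (fun j _ => hP0 i j))

end P6
end Bus
set_option linter.unusedSectionVars false
namespace Bus
section P7
variable {S : Type*} [MetricSpace S] [BSurf S]
variable {ι : Type*} [Fintype ι] [DecidableEq ι] {q : ι → S}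

def flp (j : ι) (c : ι → Bool) : ι → Bool := Function.update c j (!c j)

theorem flp_invol (j : ι) : Function.Involutive (flp j) := by
  intro c; unfold flp; ext k; by_cases h : k = j
  · subst h; simp
  · simp [h]

theorem flp_same (j : ι) (c : ι → Bool) : flp j c j = !c j := by simp [flp]
theorem flp_ne {j k : ι} (c : ι → Bool) (h : k ≠ j) : flp j c k = c k := by simp [flp, h]

theorem Ed_congr {c c' : ι → Bool} {i j : ι} (h : ∀ k, k ≠ i → k ≠ j → c k = c' k) :
    Ed q c i j ↔ Ed q c' i j := by
  unfold Ed
  constructor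
  · rintro ⟨h1, h2⟩; exact ⟨h1, fun k k1 k2 => by rw [h2 k k1 k2, h k k1 k2]⟩
  · rintro ⟨h1, h2⟩; exact ⟨h1, fun k k1 k2 => by rw [h2 k k1 k2, h k k1 k2]⟩

open Classical in
noncomputable def tm (q : ι → S) (x y i j : ι) (c : ι → Bool) : ℝ :=
  if Ed q c i j then (if c i ≠ c j then dist (q i) (q j) else - dist (q i) (q j)) * (if c x ≠ c y then 1 else 0) else 0

theorem tm_flip {x y i j v : ι} (hij : i ≠ j) (hv : v = i ∨ v = j) (h1 : x ≠ v) (h2 : y ≠ v) (c : ι → Bool) :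
    tm q x y i j (flp v c) = - tm q x y i j c := by
  classical
  unfold tm
  have he : Ed q (flp v c) i j ↔ Ed q c i j := Ed_congr (fun k k1 k2 => flp_ne c (by rcases hv with rfl | rfl <;> assumption))
  rw [flp_ne c h1, flp_ne c h2]
  by_cases h : Ed q c i j
  · rw [if_pos h, if_pos (he.2 h)]
    rcases hv with rfl | rfl
    · rw [flp_same, flp_ne c hij.symm]
      cases c v <;> cases c j <;> by_cases hxy : c x = c y <;> simp [hxy]
    · rw [flp_same, flp_ne c hij]
      cases c i <;> cases c v <;> by_cases hxy : c x = c y <;> simp [hxy]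
  · rw [if_neg h, if_neg (fun k => h (he.1 k))]; simp

theorem sum_tm_zero {x y i j v : ι} (hij : i ≠ j) (hv : v = i ∨ v = j) (h1 : x ≠ v) (h2 : y ≠ v) :
    ∑ c, tm q x y i j c = 0 := by
  have h := Equiv.sum_comp (flp_invol v).toPerm (tm q x y i j)
  simp only [Function.Involutive.coe_toPerm, tm_flip hij hv h1 h2, Finset.sum_neg_distrib] at h
  linarith

theorem sum_tm_self (i : ι) (x y : ι) : ∑ c, tm q x y i i c = 0 := by
  apply Finset.sum_eq_zero; intro c _; unfold tm; rw [if_neg]; intro h; exact h.1 rfl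

theorem sum_tm_main {x y : ι} (h : x ≠ y) {i j : ι} (hij : i ≠ j) (hi : i = x ∨ i = y) (hj : j = x ∨ j = y) :
    ∑ c, tm q x y i j c = 2 * dist (q x) (q y) := by
  classical
  let c0 : Bool → ι → Bool := fun b k => if k = x then b else if k = y then !b else eps (q i) (q j) (q k)
  have hd : dist (q i) (q j) = dist (q x) (q y) := by
    rcases hi with rfl | rfl <;> rcases hj with rfl | rfl
    · exact absurd rfl hij
    · rfl
    · exact dist_comm _ _
    · exact absurd rfl hij
  have hx : ∀ b, c0 b x = b := fun b => by simp [c0]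
  have hy : ∀ b, c0 b y = !b := fun b => by simp [c0, h.symm]
  have hne : c0 true ≠ c0 false := by
    intro k; have := congrFun k x; rw [hx, hx] at this; exact absurd this (by simp)
  have hk : ∀ k, (k ≠ i ∧ k ≠ j) ↔ (k ≠ x ∧ k ≠ y) := by
    intro k; rcases hi with rfl | rfl <;> rcases hj with rfl | rfl <;> tauto
  have hE : ∀ b, Ed q (c0 b) i j := fun b => ⟨hij, fun k k1 k2 => by
    have := (hk k).1 ⟨k1, k2⟩; simp [c0, this.1, this.2]⟩
  have hv : ∀ b, tm q x y i j (c0 b) = dist (q x) (q y) := by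
    intro b
    unfold tm
    rw [if_pos (hE b), hx, hy, hd]
    have : c0 b i ≠ c0 b j := by
      rcases hi with rfl | rfl <;> rcases hj with rfl | rfl
      · exact absurd rfl hij
      · rw [hx, hy]; simp
      · rw [hx, hy]; simp
      · exact absurd rfl hij
    simp [this]
  rw [← Finset.sum_subset (Finset.subset_univ {c0 true, c0 false}), Finset.sum_pair hne, hv, hv]
  · ring
  · intro c _ hc
    unfold tm
    by_cases he : Ed q c i j
    · rw [if_pos he]
      by_cases hxy : c x = c y
      · simp [hxy]
      · exfalso; apply hc
        have : c = c0 (c x) := by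
          ext k
          by_cases k1 : k = x
          · rw [k1, hx]
          by_cases k2 : k = y
          · rw [k2, hy]; revert hxy; cases c x <;> cases c y <;> simp
          have := (hk k).2 ⟨k1, k2⟩
          rw [← he.2 k this.1 this.2]
          simp [c0, k1, k2]
        rw [this]; cases c x <;> simp
    · rw [if_neg he]

theorem sum_ww {x y : ι} (h : x ≠ y) :
    ∑ c, ww q c * (if c x ≠ c y then 1 else 0) = 4 * dist (q x) (q y) := by
  classical
  have e1 : ∀ c : ι → Bool, ww q c * (if c x ≠ c y then 1 else 0) = ∑ i, ∑ j, tm q x y i j c := by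
    intro c
    unfold ww tm
    simp only [Finset.sum_mul]
    refine Finset.sum_congr rfl (fun i _ => Finset.sum_congr rfl (fun j _ => ?_))
    split_ifs <;> simp
  simp only [e1]
  rw [Finset.sum_comm]
  have e2 : ∀ i, ∑ c : ι → Bool, ∑ j, tm q x y i j c = ∑ j, ∑ c, tm q x y i j c := fun i => Finset.sum_comm
  simp only [e2]
  have z1 : ∀ i j, ¬ (i = x ∨ i = y) → ∑ c, tm q x y i j c = 0 := by
    intro i j hi
    push Not at hi
    by_cases hij : i = j
    · rw [hij]; exact sum_tm_self _ _ _
    · exact sum_tm_zero hij (Or.inl rfl) (Ne.symm hi.1) (Ne.symm hi.2)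
  have z2 : ∀ i j, ¬ (j = x ∨ j = y) → ∑ c, tm q x y i j c = 0 := by
    intro i j hi
    push Not at hi
    by_cases hij : i = j
    · rw [hij]; exact sum_tm_self _ _ _
    · exact sum_tm_zero hij (Or.inr rfl) (Ne.symm hi.1) (Ne.symm hi.2)
  have r : ∀ i, ∑ j, ∑ c, tm q x y i j c = ∑ c, tm q x y i x c + ∑ c, tm q x y i y c := by
    intro i
    rw [← Finset.sum_pair (f := fun j => ∑ c, tm q x y i j c) h]
    symm
    exact Finset.sum_subset (Finset.subset_univ _) (fun j _ hj => z2 i j (by simpa using hj))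
  rw [← Finset.sum_subset (Finset.subset_univ {x, y}) (fun i _ hi => ?_), Finset.sum_pair h, r, r,
    sum_tm_self, sum_tm_self, sum_tm_main h h (Or.inl rfl) (Or.inr rfl),
    sum_tm_main h h.symm (Or.inr rfl) (Or.inl rfl)]
  · ring
  · exact Finset.sum_eq_zero (fun j _ => z1 i j (by simpa using hi))

def Lm (w : (ι → Bool) → ℝ) : ι → ι → ℝ := fun x y => ∑ c, w c * (if c x ≠ c y then 1 else 0)

theorem gen_real (hq : Gen q) (M : ℝ) (hM : ∀ i j, dist (q i) (q j) ≤ M) (hM0 : 0 ≤ M) :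
    ∃ w ∈ Icc (0 : (ι → Bool) → ℝ) (fun _ => M), Lm w = fun x y => dist (q x) (q y) := by
  classical
  let w : (ι → Bool) → ℝ := fun c => if (∃ b, c b = false) ∧ (∃ b, c b = true) then ww q c / 4 else 0
  have hL : Lm w = fun x y => dist (q x) (q y) := by
    ext x y
    by_cases h : x = y
    · subst h; simp [Lm]
    have : dist (q x) (q y) = (∑ c, ww q c * (if c x ≠ c y then 1 else 0)) / 4 := by rw [sum_ww h]; ring
    rw [this, Finset.sum_div]
    refine Finset.sum_congr rfl (fun c _ => ?_)
    by_cases hc : c x = c y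
    · simp [hc]
    · have : (∃ b, c b = false) ∧ (∃ b, c b = true) := by
        cases hx : c x <;> cases hy : c y
        · rw [hx, hy] at hc; exact absurd rfl hc
        · exact ⟨⟨x, hx⟩, ⟨y, hy⟩⟩
        · exact ⟨⟨y, hy⟩, ⟨x, hx⟩⟩
        · rw [hx, hy] at hc; exact absurd rfl hc
      simp only [w, if_pos this]; ring
  have h0 : ∀ c, 0 ≤ w c := by
    intro c
    simp only [w]
    split_ifs with h
    · have := ww_nonneg hq h.1 h.2; positivity
    · exact le_rfl
  refine ⟨w, ⟨h0, fun c => ?_⟩, hL⟩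
  by_cases h : (∃ b, c b = false) ∧ (∃ b, c b = true)
  · obtain ⟨⟨i, hi⟩, ⟨j, hj⟩⟩ := h
    refine le_trans ?_ (hM i j)
    have := congrFun (congrFun hL i) j
    rw [← this]
    refine le_trans ?_ (Finset.single_le_sum (f := fun c => w c * (if c i ≠ c j then 1 else 0)) (fun c' _ => ?_)
      (Finset.mem_univ c))
    · simp [hi, hj]
    · have := h0 c'
      split_ifs <;> simp [this]
  · simp only [w, if_neg h]; exact hM0

theorem btw_inj {x z m m' : S} (h : Btw x m z) (h' : Btw x m' z) (hd : dist x m = dist x m') : m = m' := by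
  rcases btw_total h h' with k | k <;> unfold Btw at k
  · exact dist_le_zero.1 (by linarith)
  · exact (dist_le_zero.1 (by linarith)).symm

theorem nobtw (x z m : S) {ε : ℝ} (hε : 0 < ε) : ∃ m', dist m' m < ε ∧ ¬ Btw x m' z := by
  by_contra hc
  push Not at hc
  have hcont : ContinuousAt (hE S).symm (hE S m) := (hE S).symm.continuous.continuousAt
  obtain ⟨δ, hδ, hb⟩ := Metric.continuousAt_iff.1 hcont ε hε
  set p : ℝ → ℂ := fun θ => hE S m + ((δ / 2 : ℝ) : ℂ) * Complex.exp (θ * Complex.I) with hp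
  have hpn : ∀ θ, dist (p θ) (hE S m) < δ := by
    intro θ
    rw [hp, dist_eq_norm]
    simp only [add_sub_cancel_left, norm_mul, Complex.norm_exp_ofReal_mul_I, Complex.norm_real, Real.norm_eq_abs]
    rw [abs_of_pos (by positivity)]; linarith
  have hB : ∀ θ, Btw x ((hE S).symm (p θ)) z := fun θ => hc _ (by
    have := hb (hpn θ)
    simpa using this)
  have hpc : Continuous p := by rw [hp]; fun_prop
  have hpi : ∀ θ, p (θ + Real.pi) = hE S m - ((δ / 2 : ℝ) : ℂ) * Complex.exp (θ * Complex.I) := by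
    intro θ
    simp only [hp]
    push_cast
    rw [add_mul, Complex.exp_add, Complex.exp_pi_mul_I]; ring
  have hper : ∀ θ, p (θ + Real.pi + Real.pi) = p θ := by
    intro θ
    rw [hpi, hp]
    push_cast
    rw [add_mul, Complex.exp_add, Complex.exp_pi_mul_I]; ring
  set F : ℝ → ℝ := fun θ => dist x ((hE S).symm (p θ)) with hF
  have hFc : Continuous F := by
    rw [hF]; exact continuous_const.dist ((hE S).symm.continuous.comp hpc)
  have hG : Continuous (fun θ => F θ - F (θ + Real.pi)) := hFc.sub (hFc.comp (by fun_prop))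
  have hflip : ∀ θ, F (θ + Real.pi) - F (θ + Real.pi + Real.pi) = -(F θ - F (θ + Real.pi)) := by
    intro θ
    have : F (θ + Real.pi + Real.pi) = F θ := by simp only [hF, hper]
    rw [this]; ring
  have hz : (0 : ℝ) ∈ range (fun θ => F θ - F (θ + Real.pi)) := by
    rcases le_total (F 0 - F (0 + Real.pi)) 0 with h | h
    · exact mem_range_of_exists_le_of_exists_ge hG ⟨0, h⟩ ⟨0 + Real.pi, by
        simp only [hflip]; linarith⟩
    · exact mem_range_of_exists_le_of_exists_ge hG ⟨0 + Real.pi, by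
        simp only [hflip]; linarith⟩ ⟨0, h⟩
  obtain ⟨θ, hθ⟩ := hz
  have h1 := btw_inj (hB θ) (hB (θ + Real.pi)) (by simp only [hF] at hθ; linarith)
  have h2 := (hE S).symm.injective h1
  rw [hpi] at h2
  simp only [hp] at h2
  have h3 : ((δ / 2 : ℝ) : ℂ) * Complex.exp (θ * Complex.I) = 0 := by linear_combination h2 / 2
  rcases mul_eq_zero.1 h3 with h | h
  · have : δ / 2 = 0 := by exact_mod_cast h
    linarith
  · exact Complex.exp_ne_zero _ h

def VV (S : Type*) [MetricSpace S] (ι : Type*) (t : ι × ι × ι) : Set (ι → S) :=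
  {p | t.1 ≠ t.2.1 → t.2.1 ≠ t.2.2 → t.1 ≠ t.2.2 → ¬ Btw (p t.1) (p t.2.1) (p t.2.2)}

theorem VV_open (t : ι × ι × ι) : IsOpen (VV S ι t) := by
  by_cases h : t.1 ≠ t.2.1 ∧ t.2.1 ≠ t.2.2 ∧ t.1 ≠ t.2.2
  · have : VV S ι t = {p | dist (p t.1) (p t.2.1) + dist (p t.2.1) (p t.2.2) = dist (p t.1) (p t.2.2)}ᶜ := by
      ext p; simp [VV, h, Btw]
    rw [this, isOpen_compl_iff]
    exact isClosed_eq (by fun_prop) (by fun_prop)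
  · have : VV S ι t = univ := by
      ext p; simp only [VV, mem_setOf_eq, mem_univ, iff_true]; intro a b c; exact absurd ⟨a, b, c⟩ h
    rw [this]; exact isOpen_univ

theorem VV_dense (t : ι × ι × ι) : Dense (VV S ι t) := by
  intro p
  rw [Metric.mem_closure_iff]
  intro ε hε
  obtain ⟨m, hm, hb⟩ := nobtw (p t.1) (p t.2.2) (p t.2.1) hε
  refine ⟨Function.update p t.2.1 m, ?_, ?_⟩
  · intro a b c
    rw [Function.update_of_ne a, Function.update_self, Function.update_of_ne b.symm]
    exact hb
  · rw [dist_pi_lt_iff hε]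
    intro k
    by_cases hk : k = t.2.1
    · subst hk; rw [Function.update_self, dist_comm]; exact hm
    · rw [Function.update_of_ne hk, dist_self]; exact hε

theorem fin_dense {X α : Type*} [TopologicalSpace X] (V : α → Set X) (ho : ∀ a, IsOpen (V a))
    (hd : ∀ a, Dense (V a)) (s : Finset α) : IsOpen (⋂ a ∈ s, V a) ∧ Dense (⋂ a ∈ s, V a) := by
  classical
  induction s using Finset.induction_on with
  | empty => simp
  | insert a s _ ih =>
    rw [Finset.set_biInter_insert]
    exact ⟨(ho a).inter ih.1, (hd a).inter_of_isOpen_left ih.2 (ho a)⟩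

theorem gen_dense : Dense {p : ι → S | Gen p} := by
  refine (fin_dense (VV S ι) VV_open VV_dense Finset.univ).2.mono ?_
  intro p hp
  simp only [Finset.mem_univ, iInter_true, mem_iInter] at hp
  intro i j k h1 h2 h3
  exact ⟨hp (i, j, k) h1 h2 h3, hp (j, k, i) h2 h3.symm h1.symm, hp (k, i, j) h3.symm h1 h2.symm⟩

theorem all_real (q : ι → S) :
    ∃ w : (ι → Bool) → ℝ, (∀ c, 0 ≤ w c) ∧ Lm w = fun x y => dist (q x) (q y) := by
  set M : ℝ := (∑ i, ∑ j, dist (q i) (q j)) + 1 with hM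
  have hs : ∀ i j, dist (q i) (q j) ≤ ∑ i, ∑ j, dist (q i) (q j) := fun i j =>
    (Finset.single_le_sum (f := fun j => dist (q i) (q j)) (fun _ _ => dist_nonneg) (Finset.mem_univ j)).trans
      (Finset.single_le_sum (f := fun i => ∑ j, dist (q i) (q j))
        (fun _ _ => Finset.sum_nonneg (fun _ _ => dist_nonneg)) (Finset.mem_univ i))
  have hM0 : 0 ≤ M := by positivity
  have hLc : Continuous (Lm : ((ι → Bool) → ℝ) → ι → ι → ℝ) := by
    unfold Lm; fun_prop
  have hK : IsClosed (Lm '' Icc (0 : (ι → Bool) → ℝ) (fun _ => M)) := (isCompact_Icc.image hLc).isClosed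
  have hDc : Continuous (fun (p : ι → S) (x y : ι) => dist (p x) (p y)) := by fun_prop
  have hcl := hK.preimage hDc
  have hU : IsOpen (⋂ i : ι, ⋂ j : ι, {p : ι → S | dist (p i) (p j) < M}) :=
    isOpen_iInter_of_finite (fun i => isOpen_iInter_of_finite (fun j =>
      isOpen_lt (by fun_prop) continuous_const))
  have hqU : q ∈ (⋂ i : ι, ⋂ j : ι, {p : ι → S | dist (p i) (p j) < M}) := by
    simp only [mem_iInter, mem_setOf_eq]
    intro i j
    have := hs i j
    linarith
  have hq : q ∈ closure ((⋂ i : ι, ⋂ j : ι, {p : ι → S | dist (p i) (p j) < M}) ∩ {p : ι → S | Gen p}) :=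
    gen_dense.open_subset_closure_inter hU hqU
  have hsub : ((⋂ i : ι, ⋂ j : ι, {p : ι → S | dist (p i) (p j) < M}) ∩ {p : ι → S | Gen p}) ⊆
      (fun (p : ι → S) (x y : ι) => dist (p x) (p y)) ⁻¹' (Lm '' Icc (0 : (ι → Bool) → ℝ) (fun _ => M)) := by
    rintro p ⟨hp1, hp2⟩
    simp only [mem_iInter, mem_setOf_eq] at hp1
    obtain ⟨w, hw, hL⟩ := gen_real hp2 M (fun i j => (hp1 i j).le) hM0
    exact ⟨w, hw, hL⟩
  obtain ⟨w, hw, hL⟩ := closure_minimal hsub hcl hq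
  exact ⟨w, fun c => hw.1 c, hL⟩

end P7
end Bus

theorem busemann_surface_general_position_l1_embeddable {S : Type*} [MetricSpace S]
    (hS : IsBusemannSurface S)
    (Q : Set S) (hQfin : Q.Finite) (hgen : InGeneralPosition Q) :
    ∃ (N : ℕ) (φ : S → Fin N → ℝ),
      ∀ x ∈ Q, ∀ y ∈ Q, (∑ i : Fin N, |φ x i - φ y i|) = dist x y := by
  classical
  haveI : Bus.BSurf S := ⟨hS.1, hS.2⟩
  haveI : Fintype ↥Q := hQfin.fintype
  obtain ⟨w, h0, hL⟩ := Bus.all_real (fun a : ↥Q => (a : S))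
  refine ⟨Fintype.card (↥Q → Bool), fun s i => if h : s ∈ Q then
    (if (Fintype.equivFin (↥Q → Bool)).symm i ⟨s, h⟩ = true then w ((Fintype.equivFin (↥Q → Bool)).symm i) else 0)
    else 0, ?_⟩
  intro x hx y hy
  have h := congrFun (congrFun hL ⟨x, hx⟩) ⟨y, hy⟩
  simp only at h
  rw [← h]
  unfold Bus.Lm
  rw [← Equiv.sum_comp (Fintype.equivFin (↥Q → Bool)).symm]
  refine Finset.sum_congr rfl (fun i _ => ?_)
  simp only [dif_pos hx, dif_pos hy]
  have := h0 ((Fintype.equivFin (↥Q → Bool)).symm i)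
  cases h1 : (Fintype.equivFin (↥Q → Bool)).symm i ⟨x, hx⟩ <;>
    cases h2 : (Fintype.equivFin (↥Q → Bool)).symm i ⟨y, hy⟩ <;> simp [abs_of_nonneg this]
end

section
/- (Perturbation into general position) Let (S,d) be a Busemann surface, let Q = {p₁,…,pₙ} be a finite set of points of S, and let ε > 0. Then there exist points p'₁,…,p'ₙ ∈ S forming a set in general position such that d(pᵢ,p'ᵢ) < ε for every i (hence |d(pᵢ,pⱼ) − d(p'ᵢ,p'ⱼ)| < 2ε for all i, j). -/
open Metric Set MeasureTheory

lemma exists_geod_through {S : Type*} [MetricSpace S] (hG : IsGeodesicMetricSpace S)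
    (x y z : S) (h : dist x y + dist y z = dist x z) :
    ∃ γ : ℝ → S, IsGeodesicFromTo γ x z ∧ γ (dist x y) = y := by
  obtain ⟨γ₁, h1, h10, h11⟩ := hG x y
  obtain ⟨γ₂, h2, h20, h21⟩ := hG y z
  have p1 : 0 ≤ dist x y := dist_nonneg
  have p2 : 0 ≤ dist y z := dist_nonneg
  have e1 : ∀ s, s ≤ dist x y →
      (fun s => if s ≤ dist x y then γ₁ s else γ₂ (s - dist x y)) s = γ₁ s := by
    intro s hs; simp [hs]
  have e2 : ∀ s, dist x y ≤ s →
      (fun s => if s ≤ dist x y then γ₁ s else γ₂ (s - dist x y)) s = γ₂ (s - dist x y) := by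
    intro s hs
    rcases hs.eq_or_lt with h | h
    · subst h; simp [h11, h20]
    · simp [not_le.2 h]
  generalize hγ : (fun s => if s ≤ dist x y then γ₁ s else γ₂ (s - dist x y)) = γ at e1 e2
  have key : ∀ s t, 0 ≤ s → s ≤ t → t ≤ dist x z → dist (γ s) (γ t) = t - s := by
    intro s t hs hst ht
    rcases le_total t (dist x y) with h' | h'
    · rw [e1 _ h', e1 _ (hst.trans h'), h1 s ⟨hs, hst.trans h'⟩ t ⟨hs.trans hst, h'⟩,
        abs_sub_comm, abs_of_nonneg (by linarith)]
    rcases le_total s (dist x y) with h'' | h''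
    · rw [e1 _ h'', e2 _ h']
      have a1 := h1 s ⟨hs, h''⟩ (dist x y) ⟨p1, le_rfl⟩
      have a2 := h2 0 ⟨le_rfl, p2⟩ (t - dist x y) ⟨by linarith, by linarith⟩
      have a3 := h1 0 ⟨le_rfl, p1⟩ s ⟨hs, h''⟩
      have a4 := h2 (t - dist x y) ⟨by linarith, by linarith⟩ (dist y z) ⟨p2, le_rfl⟩
      rw [h11, abs_sub_comm, abs_of_nonneg (by linarith)] at a1
      rw [h20, abs_sub_comm, abs_of_nonneg (by linarith)] at a2
      rw [h10, abs_sub_comm, abs_of_nonneg (by linarith)] at a3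
      rw [h21, abs_sub_comm, abs_of_nonneg (by linarith)] at a4
      have b1 := dist_triangle (γ₁ s) y (γ₂ (t - dist x y))
      have b2 := dist_triangle4 x (γ₁ s) (γ₂ (t - dist x y)) z
      linarith
    · rw [e2 _ h'', e2 _ h', h2 _ ⟨by linarith, by linarith⟩ _ ⟨by linarith, by linarith⟩,
        abs_sub_comm, abs_of_nonneg (by linarith)]
      ring
  refine ⟨γ, ⟨?_, ?_, ?_⟩, ?_⟩
  · intro s hs t ht
    rcases le_total s t with h' | h'
    · rw [key s t hs.1 h' ht.2, abs_sub_comm, abs_of_nonneg (by linarith)]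
    · rw [dist_comm, key t s ht.1 h' hs.2, abs_of_nonneg (by linarith)]
  · rw [e1 _ p1, h10]
  · rw [e2 _ (by linarith), ← h, add_sub_cancel_left, h21]
  · rw [e1 _ le_rfl, h11]

lemma between_unique {S : Type*} [MetricSpace S] (hS : IsBusemannSpace S)
    (x z y y' : S) (h : dist x y + dist y z = dist x z)
    (h' : dist x y' + dist y' z = dist x z) (e : dist x y = dist x y') : y = y' := by
  obtain ⟨γ, ⟨g1, g2, g3⟩, g4⟩ := exists_geod_through hS.1 x y z h
  obtain ⟨γ', ⟨k1, k2, k3⟩, k4⟩ := exists_geod_through hS.1 x y' z h'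
  have p1 : 0 ≤ dist x y := dist_nonneg
  have p2 : 0 ≤ dist y z := dist_nonneg
  rcases (dist_nonneg (x := x) (y := z)).eq_or_lt with h0 | h0
  · have : dist x y = 0 := by linarith
    have h2 : dist x y' = 0 := by rw [← e, this]
    rw [← dist_eq_zero.1 this, ← dist_eq_zero.1 h2]
  have cv := hS.2 γ γ' 0 (dist x z) 0 (dist x z) h0.le h0.le g1 k1
  have c := cv.2 (show (0 : ℝ) ∈ Set.Icc (0 : ℝ) 1 by simp)
    (show (1 : ℝ) ∈ Set.Icc (0 : ℝ) 1 by simp)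
    (show 0 ≤ 1 - dist x y / dist x z by rw [sub_nonneg, div_le_one h0]; linarith)
    (show 0 ≤ dist x y / dist x z by positivity) (by ring)
  simp only [smul_eq_mul, mul_zero, mul_one, zero_add, sub_zero, sub_self, zero_mul, one_mul,
    g2, g3, k2, k3, dist_self, add_zero] at c
  rw [div_mul_cancel₀ _ h0.ne', g4, e, k4] at c
  exact dist_le_zero.1 c

lemma between_interior {S : Type*} [MetricSpace S] (hS : IsBusemannSurface S)
    (x z : S) (U : Set S) (hU : IsOpen U) (hne : U.Nonempty) :
    ∃ y ∈ U, dist x y + dist y z ≠ dist x z := by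
  by_contra! hcon
  obtain ⟨φ⟩ := hS.2
  obtain ⟨u, hu⟩ := hne
  have hV : IsOpen (φ.symm ⁻¹' U) := hU.preimage φ.symm.continuous
  obtain ⟨r, hr, hb⟩ := Metric.isOpen_iff.1 hV (φ u) (by simpa using hu)
  have hsph : ∀ v ∈ sphere (0 : ℝ × ℝ) (r/2), φ u + v ∈ φ.symm ⁻¹' U := by
    intro v hv
    apply hb
    rw [mem_sphere_zero_iff_norm] at hv
    rw [mem_ball, dist_eq_norm, add_sub_cancel_left, hv]; linarith
  have hneg : ∀ v ∈ sphere (0 : ℝ × ℝ) (r/2), -v ∈ sphere (0 : ℝ × ℝ) (r/2) := by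
    intro v hv
    simpa [mem_sphere_zero_iff_norm] using hv
  have hrank : 1 < Module.rank ℝ (ℝ × ℝ) := by
    simp only [rank_prod', Module.rank_self]
    rw [one_add_one_eq_two]; exact Cardinal.one_lt_two
  have hc := isConnected_sphere hrank (0 : ℝ × ℝ) (r := r/2) (by linarith)
  let g : ℝ × ℝ → ℝ := fun v => dist x (φ.symm (φ u + v)) - dist x (φ.symm (φ u - v))
  have hg : Continuous g := by fun_prop
  obtain ⟨w, hw⟩ := hc.nonempty
  have hodd : g (-w) = - g w := by simp only [g, sub_neg_eq_add, neg_sub, ← sub_eq_add_neg]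
  have hz : ∃ v ∈ sphere (0 : ℝ × ℝ) (r/2), g v = 0 := by
    rcases le_total (g w) 0 with h | h
    · exact hc.isPreconnected.intermediate_value hw (hneg w hw) hg.continuousOn
        ⟨h, by rw [hodd]; linarith⟩
    · exact hc.isPreconnected.intermediate_value (hneg w hw) hw hg.continuousOn
        ⟨by rw [hodd]; linarith, h⟩
  obtain ⟨v, hv, hv0⟩ := hz
  have h1 := hcon _ (hsph v hv)
  have h2 := hcon _ (hsph _ (hneg v hv))
  rw [← sub_eq_add_neg] at h2
  have h3 := φ.symm.injective (between_unique hS.1 x z _ _ h1 h2 (sub_eq_zero.1 hv0))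
  have h4 : v = 0 := by
    have : v = -v := by rw [sub_eq_add_neg] at h3; exact add_left_cancel h3
    exact self_eq_neg.1 this
  rw [h4, mem_sphere_zero_iff_norm, norm_zero] at hv
  linarith

lemma dense_open_finset {X ι : Type*} [TopologicalSpace X] (s : Finset ι) (U : ι → Set X)
    (h : ∀ i ∈ s, IsOpen (U i) ∧ Dense (U i)) :
    IsOpen (⋂ i ∈ s, U i) ∧ Dense (⋂ i ∈ s, U i) := by
  classical
  induction s using Finset.induction_on with
  | empty => simp
  | insert a s ha ih =>
    have := ih (fun i hi => h i (Finset.mem_insert_of_mem hi))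
    have h' := h a (Finset.mem_insert_self _ _)
    rw [Finset.set_biInter_insert]
    exact ⟨h'.1.inter this.1, h'.2.inter_of_isOpen_left this.2 h'.1⟩

lemma bad_open_dense {S : Type*} [MetricSpace S] (hS : IsBusemannSurface S)
    (n : ℕ) (i j k : Fin n) (hij : i ≠ j) (hkj : k ≠ j) :
    IsOpen {q : Fin n → S | dist (q i) (q j) + dist (q j) (q k) ≠ dist (q i) (q k)} ∧
    Dense {q : Fin n → S | dist (q i) (q j) + dist (q j) (q k) ≠ dist (q i) (q k)} := by
  constructor
  · exact isOpen_ne_fun (by fun_prop) (by fun_prop)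
  · rw [dense_iff_inter_open]
    rintro V hV ⟨q, hq⟩
    have hc : Continuous (fun y : S => Function.update q j y) :=
      continuous_const.update j continuous_id
    obtain ⟨y, hy, hy'⟩ := between_interior hS (q i) (q k) _ (hV.preimage hc)
      ⟨q j, by simpa using hq⟩
    exact ⟨_, hy, by simpa [hij, hkj] using hy'⟩

/-- perturbation into general position: any finite family of points of a
Busemann surface can be perturbed by less than `ε` into a set in general position. -/
theorem busemann_surface_perturbation {S : Type*} [MetricSpace S]
    (hS : IsBusemannSurface S)
    (n : ℕ) (p : Fin n → S) (ε : ℝ) (hε : 0 < ε) :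
    ∃ p' : Fin n → S, InGeneralPosition (Set.range p') ∧
      (∀ i, dist (p i) (p' i) < ε) ∧
      (∀ i j, |dist (p i) (p j) - dist (p' i) (p' j)| < 2 * ε) := by
  classical
  have hd := (dense_open_finset
    (Finset.univ.filter fun t : Fin n × Fin n × Fin n => t.1 ≠ t.2.1 ∧ t.2.2 ≠ t.2.1)
    (fun t => {q : Fin n → S | dist (q t.1) (q t.2.1) + dist (q t.2.1) (q t.2.2)
      ≠ dist (q t.1) (q t.2.2)})
    (fun t ht => by
      have := (Finset.mem_filter.1 ht).2
      exact bad_open_dense hS n _ _ _ this.1 this.2)).2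
  obtain ⟨p', hp', hclose⟩ := hd.exists_dist_lt p hε
  simp only [Set.mem_iInter, Finset.mem_filter, Finset.mem_univ, true_and, Prod.forall,
    Set.mem_ofPred_eq] at hp'
  have hcl : ∀ i, dist (p i) (p' i) < ε := fun i => (dist_le_pi_dist p p' i).trans_lt hclose
  refine ⟨p', ?_, hcl, ?_⟩
  · rintro _ ⟨i, rfl⟩ _ ⟨j, rfl⟩ _ ⟨k, rfl⟩ hij hjk hik L ⟨ℓ, hl, rfl⟩ ⟨⟨a, ha⟩, ⟨b, hb⟩, ⟨c, hc⟩⟩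
    have nij : i ≠ j := fun h => hij (h ▸ rfl)
    have njk : j ≠ k := fun h => hjk (h ▸ rfl)
    have nik : i ≠ k := fun h => hik (h ▸ rfl)
    have A := hp' i j k ⟨nij, njk.symm⟩
    have B := hp' j i k ⟨nij.symm, nik.symm⟩
    have C := hp' i k j ⟨nik, njk⟩
    rw [← ha, ← hb, ← hc] at A B C
    simp only [hl.dist_eq, Real.dist_eq] at A B C
    grind
  · intro i j
    have := dist_triangle4 (p i) (p' i) (p' j) (p j)
    have := dist_triangle4 (p' i) (p i) (p j) (p' j)
    have := hcl i
    have := hcl j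
    rw [dist_comm (p' i) (p i), dist_comm (p' j) (p j)] at *
    rw [abs_lt]; constructor <;> linarith [dist_comm (p j) (p' j)]
end
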